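/- arXiv:1811.03769 — 7 statements merged into one kernel-verified Lean document; each statement's English description precedes it below -/
import Mathlib

section
/- Let d ∈ ℕ and β > 0. Let (Σ_j) be a sequence of nonempty closed subsets of the closed ball B(0,10) ⊆ ℝ^{d+1} converging in the Hausdorff metric to a nonempty compact set Σ. Suppose that for every j, every x ∈ Σ_j ∩ B(0,2) and every 0 < r < 2 one has bβ_{Σ_j}(x,r) ≥ β. Then for every x ∈ Σ ∩ B(0,1) and every 0 < r < 1 one has bβ_Σ(x,r) ≥ β. -/
open MeasureTheory Metric Filter
open scoped ENNReal NNReal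

noncomputable section

/-- `bbeta d E x r` is the quantity `bβ_E(x,r)`: the infimum over all `d`-dimensional
affine planes `V ⊆ ℝ^{d+1}` of
`sup_{y ∈ E ∩ B(x,r)} dist(y,V)/r + sup_{y ∈ V ∩ B(x,r)} dist(y,E)/r`,
where suprema over empty sets are `0` (which is `Real.sSup`'s junk value). -/
def bbeta (d : ℕ) (E : Set (EuclideanSpace ℝ (Fin (d+1))))
    (x : EuclideanSpace ℝ (Fin (d+1))) (r : ℝ) : ℝ :=
  sInf { t : ℝ | ∃ V : AffineSubspace ℝ (EuclideanSpace ℝ (Fin (d+1))),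
    (V : Set (EuclideanSpace ℝ (Fin (d+1)))).Nonempty ∧
    Module.finrank ℝ V.direction = d ∧
    t = sSup ((fun y => infDist y (V : Set (EuclideanSpace ℝ (Fin (d+1))))) ''
          (E ∩ closedBall x r)) / r
      + sSup ((fun y => infDist y E) ''
          ((V : Set (EuclideanSpace ℝ (Fin (d+1)))) ∩ closedBall x r)) / r }

/-- `FDist μ ν B = sup_f |∫ f dμ − ∫ f dν|`, the supremum over all nonnegative
1-Lipschitz functions `f` supported in `B`. -/
def FDist {n : ℕ} (μ ν : Measure (EuclideanSpace ℝ (Fin n)))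
    (B : Set (EuclideanSpace ℝ (Fin n))) : ℝ :=
  sSup { t : ℝ | ∃ f : EuclideanSpace ℝ (Fin n) → ℝ,
    LipschitzWith 1 f ∧ (∀ x, 0 ≤ f x) ∧ Function.support f ⊆ B ∧
    t = |(∫ x, f x ∂μ) - ∫ x, f x ∂ν| }

/-- `alphaV d μ x r V = r^{-d-1} · inf_{c>0} F_{B(x,r)}(μ, c·H^d|_V)`. -/
def alphaV (d : ℕ) {n : ℕ} (μ : Measure (EuclideanSpace ℝ (Fin n)))
    (x : EuclideanSpace ℝ (Fin n)) (r : ℝ)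
    (V : AffineSubspace ℝ (EuclideanSpace ℝ (Fin n))) : ℝ :=
  r ^ (-(d : ℝ) - 1) *
    sInf { t : ℝ | ∃ c : ℝ, 0 < c ∧
      t = FDist μ (ENNReal.ofReal c •
            (μH[(d : ℝ)]).restrict (V : Set (EuclideanSpace ℝ (Fin n))))
          (closedBall x r) }

/-- `alphaA d μ x r = inf_V alphaV d μ x r V` over all `d`-dimensional affine planes `V`. -/
def alphaA (d : ℕ) {n : ℕ} (μ : Measure (EuclideanSpace ℝ (Fin n)))
    (x : EuclideanSpace ℝ (Fin n)) (r : ℝ) : ℝ :=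
  sInf { t : ℝ | ∃ V : AffineSubspace ℝ (EuclideanSpace ℝ (Fin n)),
    (V : Set (EuclideanSpace ℝ (Fin n))).Nonempty ∧
    Module.finrank ℝ V.direction = d ∧ t = alphaV d μ x r V }

/-- `E` is Ahlfors `s`-regular with constant `C₁`:
`C₁⁻¹ r^s ≤ H^s(E ∩ B(x,r)) ≤ C₁ r^s` for all `x ∈ E` and `0 < r < diam E`. -/
def AhlforsRegular {n : ℕ} (s C₁ : ℝ) (E : Set (EuclideanSpace ℝ (Fin n))) : Prop :=
  ∀ x ∈ E, ∀ r : ℝ, 0 < r → ENNReal.ofReal r < EMetric.diam E →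
    ENNReal.ofReal (C₁⁻¹ * r ^ s) ≤ μH[s] (E ∩ closedBall x r) ∧
    μH[s] (E ∩ closedBall x r) ≤ ENNReal.ofReal (C₁ * r ^ s)

/-- The `t`-dimensional Hausdorff content `H^t_∞(A)`: the infimum of `∑ (diam U_i)^t`
over countable covers of `A` by arbitrary sets. -/
def hContent {n : ℕ} (t : ℝ) (A : Set (EuclideanSpace ℝ (Fin n))) : ℝ≥0∞ :=
  ⨅ (U : ℕ → Set (EuclideanSpace ℝ (Fin n))) (_ : A ⊆ ⋃ i, U i),
    ∑' i, EMetric.diam (U i) ^ t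

/-- `F ⊆ ℝ^n` is `d`-rectifiable: `H^d(F) < ∞` and `F` can be covered, up to an
`H^d`-null set, by countably many Lipschitz images of `ℝ^d`. -/
def DRectifiable (d : ℕ) {n : ℕ} (F : Set (EuclideanSpace ℝ (Fin n))) : Prop :=
  μH[(d : ℝ)] F < ⊤ ∧
  ∃ f : ℕ → (EuclideanSpace ℝ (Fin d) → EuclideanSpace ℝ (Fin n)),
    (∀ i, ∃ K : ℝ≥0, LipschitzWith K (f i)) ∧
    μH[(d : ℝ)] (F \ ⋃ i, Set.range (f i)) = 0

end

open MeasureTheory Metric Filter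
open scoped ENNReal

/-!
For a fixed plane `V` both suprema in `bβ_E(x,r)` grow by at most `ε` when `E` is replaced by a set
at Hausdorff distance less than `ε` and the ball by one containing the `ε`-neighbourhood of the old
one. Multiplying by the radii and taking the infimum over `V` gives
`s · bβ_E(z,s) ≤ r · bβ_{E'}(x,r) + 2ε` whenever `d_H(E,E') < ε` and `s + ε + dist z x ≤ r`.
A point `x` of the limit set has points `z` of the approximating sets within `ε`, so
`s = r - 2ε` is admissible, and letting `ε → 0` transfers the lower bound to the limit set.
-/

section LocalExcess

variable {X : Type*} [PseudoMetricSpace X] {A A' B B' : Set X} {x y z : X} {r s ε : ℝ}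

/-- The one-sided excess of `A` over `B` in the closed ball of center `x` and radius `r`, that is
`sup_{y ∈ A ∩ B(x,r)} dist(y,B)`; the two terms of `bbeta` are quotients of such excesses by `r`.
It is `0` if `A` misses the ball or if `B` is empty, because of the conventions for `sSup ∅` and
`infDist y ∅`. -/
noncomputable def localExcess (A B : Set X) (x : X) (r : ℝ) : ℝ :=
  sSup ((fun y => infDist y B) '' (A ∩ closedBall x r))

lemma localExcess_nonneg (A B : Set X) (x : X) (r : ℝ) : 0 ≤ localExcess A B x r :=
  Real.sSup_nonneg (Set.forall_mem_image.2 fun _ _ => infDist_nonneg)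

lemma localExcess_le {M : ℝ} (hM : 0 ≤ M) (h : ∀ y ∈ A, dist y x ≤ r → infDist y B ≤ M) :
    localExcess A B x r ≤ M :=
  Real.sSup_le (Set.forall_mem_image.2 fun y hy => h y hy.1 (mem_closedBall.1 hy.2)) hM

lemma infDist_le_localExcess (hy : y ∈ A) (hyx : dist y x ≤ r) :
    infDist y B ≤ localExcess A B x r := by
  have hbdd : BddAbove ((fun y => infDist y B) '' (A ∩ closedBall x r)) := by
    refine ⟨infDist x B + r, Set.forall_mem_image.2 fun w hw => ?_⟩
    exact infDist_le_infDist_add_dist.trans (by gcongr; exact hw.2)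
  exact le_csSup hbdd (Set.mem_image_of_mem _ ⟨hy, hyx⟩)

lemma localExcess_le_add_of_hausdorffEDist_lt_left
    (hA : hausdorffEDist A A' < ENNReal.ofReal ε) (hball : s + ε + dist z x ≤ r) :
    localExcess A B z s ≤ localExcess A' B x r + ε := by
  have hε : 0 < ε := ENNReal.ofReal_pos.1 (bot_le.trans_lt hA)
  refine localExcess_le (add_nonneg (localExcess_nonneg A' B x r) hε.le) fun y hy hyz => ?_
  obtain ⟨y', hy', hyy'⟩ := exists_edist_lt_of_hausdorffEDist_lt hy hA
  have hdist : dist y y' < ε := edist_lt_ofReal.1 hyy'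
  have hy'x : dist y' x ≤ r := by
    linarith [dist_triangle4 y' y z x, dist_comm y' y]
  linarith [infDist_le_infDist_add_dist (s := B) (x := y) (y := y'),
    infDist_le_localExcess (B := B) hy' hy'x]

lemma localExcess_le_add_hausdorffDist_right (hB : hausdorffEDist B B' ≠ ⊤)
    (hball : s + dist z x ≤ r) :
    localExcess A B z s ≤ localExcess A B' x r + hausdorffDist B B' := by
  refine localExcess_le (add_nonneg (localExcess_nonneg A B' x r) hausdorffDist_nonneg)
    fun y hy hyz => ?_
  have hyx : dist y x ≤ r := by linarith [dist_triangle y z x]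
  calc infDist y B ≤ infDist y B' + hausdorffDist B' B :=
        infDist_le_infDist_add_hausdorffDist (by rwa [hausdorffEDist_comm])
    _ ≤ localExcess A B' x r + hausdorffDist B B' := by
        rw [hausdorffDist_comm]
        gcongr
        exact infDist_le_localExcess hy hyx

lemma localExcess_add_swap_le_of_hausdorffEDist_lt (V : Set X)
    (hA : hausdorffEDist A A' < ENNReal.ofReal ε) (hball : s + ε + dist z x ≤ r) :
    localExcess A V z s + localExcess V A z s ≤
      localExcess A' V x r + localExcess V A' x r + 2 * ε := by
  have hε : 0 < ε := ENNReal.ofReal_pos.1 (bot_le.trans_lt hA)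
  have hdist : hausdorffDist A A' ≤ ε := ENNReal.toReal_le_of_le_ofReal hε.le hA.le
  linarith [localExcess_le_add_of_hausdorffEDist_lt_left (B := V) hA hball,
    localExcess_le_add_hausdorffDist_right (A := V) hA.ne_top
      (by linarith : s + dist z x ≤ r)]

end LocalExcess

lemma tendsto_hausdorffEDist_zero_of_isBounded {ι X : Type*} [PseudoMetricSpace X] {l : Filter ι}
    {A : ι → Set X} {B : Set X} (hA : ∀ i, (A i).Nonempty)
    (hA_bdd : ∀ i, Bornology.IsBounded (A i)) (hB : B.Nonempty) (hB_bdd : Bornology.IsBounded B)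
    (h : Tendsto (fun i => hausdorffDist (A i) B) l (nhds 0)) :
    Tendsto (fun i => hausdorffEDist (A i) B) l (nhds 0) := by
  have hfin : ∀ i, hausdorffEDist (A i) B ≠ ⊤ := fun i =>
    hausdorffEDist_ne_top_of_nonempty_of_bounded (hA i) hB (hA_bdd i) hB_bdd
  exact (ENNReal.tendsto_toReal_iff hfin ENNReal.zero_ne_top).1 h

lemma exists_affineSubspace_finrank_direction_eq {K V : Type*} [DivisionRing K] [AddCommGroup V]
    [Module K V] {n : ℕ} (hn : n ≤ Module.finrank K V) :
    ∃ W : AffineSubspace K V, (W : Set V).Nonempty ∧ Module.finrank K W.direction = n := by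
  obtain ⟨b, hbcard, hb⟩ := exists_finset_linearIndependent_of_le_finrank hn
  refine ⟨AffineSubspace.mk' 0 (Submodule.span K b), AffineSubspace.mk'_nonempty _ _, ?_⟩
  rw [AffineSubspace.direction_mk', finrank_span_finset_eq_card hb, hbcard]

section Bbeta

variable {d : ℕ} {E E' : Set (EuclideanSpace ℝ (Fin (d + 1)))}
  {x z : EuclideanSpace ℝ (Fin (d + 1))} {r s t ε : ℝ}

lemma le_bbeta_iff (hr : 0 < r) :
    t ≤ bbeta d E x r ↔ ∀ V : AffineSubspace ℝ (EuclideanSpace ℝ (Fin (d + 1))),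
      (V : Set (EuclideanSpace ℝ (Fin (d + 1)))).Nonempty → Module.finrank ℝ V.direction = d →
        r * t ≤ localExcess E V x r + localExcess V E x r := by
  rw [bbeta, le_csInf_iff]
  · constructor
    · intro h V hV hVd
      have ht := h _ ⟨V, hV, hVd, rfl⟩
      rwa [← add_div, le_div_iff₀' hr] at ht
    · rintro h _ ⟨V, hV, hVd, rfl⟩
      rw [← add_div, le_div_iff₀' hr]
      exact h V hV hVd
  · refine ⟨0, ?_⟩
    rintro _ ⟨V, -, -, rfl⟩
    exact add_nonneg (div_nonneg (localExcess_nonneg E V x r) hr.le) (div_nonneg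
      (localExcess_nonneg (V : Set (EuclideanSpace ℝ (Fin (d + 1)))) E x r) hr.le)
  · obtain ⟨V, hV, hVd⟩ := exists_affineSubspace_finrank_direction_eq
      (K := ℝ) (V := EuclideanSpace ℝ (Fin (d + 1))) (n := d) (by simp)
    exact ⟨_, V, hV, hVd, rfl⟩

lemma mul_bbeta_le_mul_bbeta_add_of_hausdorffEDist_lt (hs : 0 < s)
    (hE : hausdorffEDist E E' < ENNReal.ofReal ε) (hball : s + ε + dist z x ≤ r) :
    s * bbeta d E z s ≤ r * bbeta d E' x r + 2 * ε := by
  have hε : 0 < ε := ENNReal.ofReal_pos.1 (bot_le.trans_lt hE)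
  have hr : 0 < r := by linarith [dist_nonneg (x := z) (y := x)]
  have h : (s * bbeta d E z s - 2 * ε) / r ≤ bbeta d E' x r := by
    refine (le_bbeta_iff hr).2 fun V hV hVd => ?_
    rw [mul_div_cancel₀ _ hr.ne']
    linarith [(le_bbeta_iff hs).1 (le_refl (bbeta d E z s)) V hV hVd,
      localExcess_add_swap_le_of_hausdorffEDist_lt V hE hball]
  rw [div_le_iff₀' hr] at h
  linarith

end Bbeta

theorem stmt0_general {ι : Type*} {l : Filter ι} [l.NeBot] {d : ℕ} {β R : ℝ}
    {Sj : ι → Set (EuclideanSpace ℝ (Fin (d + 1)))} {S U : Set (EuclideanSpace ℝ (Fin (d + 1)))}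
    (hconv : Tendsto (fun j => hausdorffEDist (Sj j) S) l (nhds 0))
    (hβj : ∀ᶠ j in l, ∀ x ∈ Sj j ∩ U, ∀ r : ℝ, 0 < r → r < R → β ≤ bbeta d (Sj j) x r) :
    ∀ x ∈ S ∩ interior U, ∀ r : ℝ, 0 < r → r ≤ R → β ≤ bbeta d S x r := by
  rintro x ⟨hxS, hxU⟩ r hr hrR
  obtain ⟨δ, hδ, hδU⟩ := Metric.mem_nhds_iff.1 (mem_interior_iff_mem_nhds.1 hxU)
  have approx : ∀ ε ∈ Set.Ioo 0 (min δ (r / 2)),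
      (r - 2 * ε) * β ≤ r * bbeta d S x r + 2 * ε := by
    rintro ε ⟨hε, hεlt⟩
    obtain ⟨hεδ, hεr⟩ := lt_min_iff.1 hεlt
    obtain ⟨j, hj, hdj⟩ :=
      (hβj.and (hconv.eventually_lt_const (ENNReal.ofReal_pos.2 hε))).exists
    obtain ⟨z, hz, hxz⟩ :=
      exists_edist_lt_of_hausdorffEDist_lt hxS (hausdorffEDist_comm.trans_lt hdj)
    have hzx : dist z x < ε := by rwa [dist_comm, ← edist_lt_ofReal]
    have hs : 0 < r - 2 * ε := by linarith
    calc (r - 2 * ε) * β ≤ (r - 2 * ε) * bbeta d (Sj j) z (r - 2 * ε) := by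
          gcongr
          exact hj z ⟨hz, hδU (hzx.trans hεδ)⟩ _ hs (by linarith)
      _ ≤ r * bbeta d S x r + 2 * ε :=
          mul_bbeta_le_mul_bbeta_add_of_hausdorffEDist_lt hs hdj (by linarith)
  have hlimit : r * β ≤ r * bbeta d S x r := by
    refine le_of_tendsto_of_tendsto (b := nhdsWithin (0 : ℝ) (Set.Ioi 0))
      (f := fun ε => (r - 2 * ε) * β) (g := fun ε => r * bbeta d S x r + 2 * ε) ?_ ?_
      (eventually_of_mem (Ioo_mem_nhdsGT (lt_min hδ (half_pos hr))) approx)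
    · exact (Continuous.tendsto' (by fun_prop) _ _ (by simp)).mono_left nhdsWithin_le_nhds
    · exact (Continuous.tendsto' (by fun_prop) _ _ (by simp)).mono_left nhdsWithin_le_nhds
  exact le_of_mul_le_mul_left hlimit hr

/-- stability of the uniform non-flatness condition `bβ ≥ β` under
Hausdorff convergence of closed subsets of `B(0,10) ⊆ ℝ^{d+1}`. -/
theorem stmt0 (d : ℕ) (β : ℝ) (hβ : 0 < β)
    (Sj : ℕ → Set (EuclideanSpace ℝ (Fin (d+1))))
    (S : Set (EuclideanSpace ℝ (Fin (d+1))))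
    (hne : ∀ j, (Sj j).Nonempty) (hcl : ∀ j, IsClosed (Sj j))
    (hsub : ∀ j, Sj j ⊆ closedBall 0 10)
    (hSne : S.Nonempty) (hScomp : IsCompact S)
    (hconv : Tendsto (fun j => hausdorffDist (Sj j) S) atTop (nhds 0))
    (hβj : ∀ j, ∀ x ∈ Sj j ∩ closedBall 0 2, ∀ r : ℝ, 0 < r → r < 2 →
      β ≤ bbeta d (Sj j) x r) :
    ∀ x ∈ S ∩ closedBall 0 1, ∀ r : ℝ, 0 < r → r < 1 → β ≤ bbeta d S x r :=
  fun x hx r hr hr1 => stmt0_general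
    (tendsto_hausdorffEDist_zero_of_isBounded hne (fun j => isBounded_closedBall.subset (hsub j))
      hSne hScomp.isBounded hconv) (.of_forall hβj) x
    ⟨hx.1, ball_subset_interior_closedBall (closedBall_subset_ball one_lt_two hx.2)⟩ r hr
    (by linarith)
end

section
/- Let d ∈ ℕ, C₁ ≥ 1 and δ ∈ (0,1]. There exists ε > 0, depending only on d, C₁ and δ, such that the following holds: if Σ ⊆ ℝ^{d+1} is a closed set which is Ahlfors d-regular with constant C₁, x ∈ Σ, 0 < r < (diam Σ)/100, V ⊆ ℝ^{d+1} is a d-dimensional affine plane with V ∩ B(x,4r) ≠ ∅, and there exists y ∈ V ∩ B(x,r) with dist(y,Σ) ≥ δr, then α_{H^d|_Σ}(x,4r,V) ≥ ε. -/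
open MeasureTheory Metric Filter
open scoped ENNReal NNReal

open MeasureTheory Metric Filter
open scoped ENNReal

/-!
Two tent functions give lower bounds for the distance between `μ` and a multiple `c • H^d|_V`.
The tent over the null ball of `μ` around `y ∈ V` does not see `μ`, so the distance is at least a
fixed multiple of `c * r ^ (d + 1)`. The tent over `B(x, 2r)` has `μ`-integral at least
`C₁⁻¹ * r ^ (d + 1)`, which can only be compensated by the plane if `c` is bounded below.
A suitable convex combination of the two bounds does not involve `c`.
-/

section Tent

variable {X : Type*} [PseudoMetricSpace X] {p z : X} {ρ : ℝ}

/-- The tent function of height and radius `ρ` centred at `p`: the test function against which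
measures are compared in lower bounds for `FDist`. -/
noncomputable def tent (p : X) (ρ : ℝ) (z : X) : ℝ :=
  max (ρ - dist z p) 0

lemma lipschitzWith_tent (p : X) (ρ : ℝ) : LipschitzWith 1 (tent p ρ) := by
  have h : LipschitzWith 1 fun z ↦ ρ - dist z p := by
    simpa using (LipschitzWith.const ρ).sub (LipschitzWith.dist_left p)
  exact h.max_const 0

lemma tent_nonneg (p : X) (ρ : ℝ) (z : X) : 0 ≤ tent p ρ z :=
  le_max_right _ _

lemma tent_le (hρ : 0 ≤ ρ) : tent p ρ z ≤ ρ :=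
  max_le (sub_le_self _ dist_nonneg) hρ

lemma norm_tent_le (hρ : 0 ≤ ρ) (z : X) : ‖tent p ρ z‖ ≤ ρ :=
  (Real.norm_of_nonneg (tent_nonneg p ρ z)).trans_le (tent_le hρ)

lemma half_le_tent (hz : z ∈ closedBall p (ρ / 2)) : ρ / 2 ≤ tent p ρ z :=
  le_max_of_le_left (by linarith [mem_closedBall.1 hz])

lemma support_tent_subset_ball (p : X) (ρ : ℝ) : Function.support (tent p ρ) ⊆ ball p ρ := by
  intro z hz
  by_contra hzp
  exact hz (max_eq_right (by linarith [not_lt.1 (mem_ball.not.1 hzp)]))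

end Tent

section Integral

lemma norm_integral_le_of_support_subset {X F : Type*} [MeasurableSpace X]
    [NormedAddCommGroup F] [NormedSpace ℝ F] {μ : Measure X} {f : X → F} {B : Set X} {M : ℝ}
    (hμ : μ B ≠ ∞) (hf : Function.support f ⊆ B) (hM : ∀ z ∈ B, ‖f z‖ ≤ M) :
    ‖∫ z, f z ∂μ‖ ≤ M * μ.real B := by
  rw [← setIntegral_eq_integral_of_forall_compl_eq_zero fun z hz ↦
    Function.notMem_support.1 (mt (@hf z) hz)]
  exact norm_setIntegral_le_of_norm_le_const hμ.lt_top hM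

variable {X : Type*} [PseudoMetricSpace X] [MeasurableSpace X] {μ : Measure X} {p : X} {ρ : ℝ}

lemma integral_tent_le (hρ : 0 ≤ ρ) (hμ : μ (ball p ρ) ≠ ∞) :
    ∫ z, tent p ρ z ∂μ ≤ ρ * μ.real (ball p ρ) :=
  (le_abs_self _).trans <| norm_integral_le_of_support_subset hμ (support_tent_subset_ball p ρ)
    fun z _ ↦ norm_tent_le hρ z

variable [OpensMeasurableSpace X]

lemma integrable_tent (hρ : 0 ≤ ρ) (hμ : μ (ball p ρ) ≠ ∞) : Integrable (tent p ρ) μ := by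
  rw [← integrableOn_iff_integrable_of_support_subset (support_tent_subset_ball p ρ)]
  exact .of_bound hμ.lt_top (lipschitzWith_tent p ρ).continuous.aestronglyMeasurable ρ
    (.of_forall (norm_tent_le hρ))

lemma half_mul_measureReal_closedBall_le_integral_tent (hρ : 0 < ρ) (hμ : μ (ball p ρ) ≠ ∞) :
    ρ / 2 * μ.real (closedBall p (ρ / 2)) ≤ ∫ z, tent p ρ z ∂μ := by
  have superlevel_subset : {z | ρ / 2 ≤ tent p ρ z} ⊆ ball p ρ := fun z hz ↦
    support_tent_subset_ball p ρ ((half_pos hρ).trans_le hz).ne'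
  have closedBall_subset : closedBall p (ρ / 2) ⊆ {z | ρ / 2 ≤ tent p ρ z} :=
    fun z hz ↦ half_le_tent hz
  calc ρ / 2 * μ.real (closedBall p (ρ / 2))
      ≤ ρ / 2 * μ.real {z | ρ / 2 ≤ tent p ρ z} := by
        gcongr
        exact measure_ne_top_of_subset superlevel_subset hμ
    _ ≤ ∫ z, tent p ρ z ∂μ :=
        mul_meas_ge_le_integral_of_nonneg (.of_forall (tent_nonneg p ρ))
          (integrable_tent hρ.le hμ) _

end Integral

lemma closedBall_ne_univ {E : Type*} [NormedAddCommGroup E] [NormedSpace ℝ E] [Nontrivial E]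
    (x : E) (r : ℝ) : closedBall x r ≠ Set.univ := fun h ↦
  NormedSpace.unbounded_univ ℝ E (h ▸ isBounded_closedBall)

section FDist

variable {n : ℕ} {μ ν : Measure (EuclideanSpace ℝ (Fin n))} {B : Set (EuclideanSpace ℝ (Fin n))}

lemma FDist_comm (μ ν : Measure (EuclideanSpace ℝ (Fin n)))
    (B : Set (EuclideanSpace ℝ (Fin n))) : FDist μ ν B = FDist ν μ B := by
  simp only [FDist, abs_sub_comm]

/- For `B = univ` the admissible functions include all nonnegative constants, and the supremum
defining `FDist` may be infinite, hence `0` in `ℝ`; a point outside `B` bounds the functions. -/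
lemma abs_integral_sub_le_FDist (hB : Bornology.IsBounded B) (hB_univ : B ≠ Set.univ)
    (hμ : μ B ≠ ∞) (hν : ν B ≠ ∞) {f : EuclideanSpace ℝ (Fin n) → ℝ} (hf : LipschitzWith 1 f)
    (hf_nonneg : ∀ z, 0 ≤ f z) (hfB : Function.support f ⊆ B) :
    |∫ z, f z ∂μ - ∫ z, f z ∂ν| ≤ FDist μ ν B := by
  obtain ⟨w, hw⟩ := (Set.ne_univ_iff_exists_notMem B).1 hB_univ
  obtain ⟨D, hD⟩ := hB.subset_closedBall w
  refine le_csSup ⟨D * μ.real B + D * ν.real B, ?_⟩ ⟨f, hf, hf_nonneg, hfB, rfl⟩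
  rintro _ ⟨g, hg, -, hgB, rfl⟩
  have norm_le : ∀ z ∈ B, ‖g z‖ ≤ D := fun z hz ↦ calc
    ‖g z‖ = dist (g z) (g w) := by
      rw [Function.notMem_support.1 (mt (@hgB w) hw), dist_zero_right]
    _ ≤ dist z w := by simpa using hg.dist_le_mul z w
    _ ≤ D := hD hz
  calc |∫ z, g z ∂μ - ∫ z, g z ∂ν| ≤ |∫ z, g z ∂μ| + |∫ z, g z ∂ν| := abs_sub _ _
    _ ≤ D * μ.real B + D * ν.real B :=
        add_le_add (norm_integral_le_of_support_subset hμ hgB norm_le)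
          (norm_integral_le_of_support_subset hν hgB norm_le)

lemma half_mul_measureReal_sub_le_FDist (hB : Bornology.IsBounded B)
    (hB_univ : B ≠ Set.univ) (hμ : μ B ≠ ∞) (hν : ν B ≠ ∞) {p : EuclideanSpace ℝ (Fin n)} {ρ : ℝ}
    (hρ : 0 < ρ) (hpB : ball p ρ ⊆ B) :
    ρ / 2 * μ.real (closedBall p (ρ / 2)) - ρ * ν.real (ball p ρ) ≤ FDist μ ν B :=
  calc ρ / 2 * μ.real (closedBall p (ρ / 2)) - ρ * ν.real (ball p ρ)
      ≤ ∫ z, tent p ρ z ∂μ - ∫ z, tent p ρ z ∂ν :=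
        sub_le_sub
          (half_mul_measureReal_closedBall_le_integral_tent hρ (measure_ne_top_of_subset hpB hμ))
          (integral_tent_le hρ.le (measure_ne_top_of_subset hpB hν))
    _ ≤ |∫ z, tent p ρ z ∂μ - ∫ z, tent p ρ z ∂ν| := le_abs_self _
    _ ≤ FDist μ ν B :=
        abs_integral_sub_le_FDist hB hB_univ hμ hν (lipschitzWith_tent p ρ) (tent_nonneg p ρ)
          ((support_tent_subset_ball p ρ).trans hpB)

lemma half_mul_measureReal_le_FDist_of_null (hB : Bornology.IsBounded B)
    (hB_univ : B ≠ Set.univ) (hμ : μ B ≠ ∞) (hν : ν B ≠ ∞) {p : EuclideanSpace ℝ (Fin n)} {ρ : ℝ}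
    (hρ : 0 < ρ) (hpB : ball p ρ ⊆ B) (hμp : μ (ball p ρ) = 0) :
    ρ / 2 * ν.real (closedBall p (ρ / 2)) ≤ FDist μ ν B := by
  simpa [FDist_comm ν μ, measureReal_def, hμp] using
    half_mul_measureReal_sub_le_FDist hB hB_univ hν hμ hρ hpB

end FDist

section Hole

/-- The constant in the lower bound for `alphaV d μ x (4 * r) V` when a ball of radius `δ * r`
centred on `V` is `μ`-null; it multiplies a lower bound for `μ (closedBall x r) / r ^ d`. -/
noncomputable def holeConst (d : ℕ) (δ : ℝ) : ℝ :=
  (δ / 2) ^ (d + 1) / ((δ / 2) ^ (d + 1) + 2 * 3 ^ d) / 4 ^ (d + 1)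

lemma holeConst_pos (d : ℕ) {δ : ℝ} (hδ : 0 < δ) : 0 < holeConst d δ := by
  unfold holeConst
  positivity

lemma mul_holeConst_mul_le {d : ℕ} {δ m r k F : ℝ} (hδ : 0 < δ)
    (h_hole : (δ / 2) ^ (d + 1) * r ^ (d + 1) * k ≤ F)
    (h_center : m * r ^ (d + 1) - 2 * 3 ^ d * r ^ (d + 1) * k ≤ F) :
    m * holeConst d δ * (4 * r) ^ (d + 1) ≤ F :=
  calc m * holeConst d δ * (4 * r) ^ (d + 1)
      = m * r ^ (d + 1) * (δ / 2) ^ (d + 1) / ((δ / 2) ^ (d + 1) + 2 * 3 ^ d) := by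
        rw [holeConst, mul_pow]
        field_simp
    _ ≤ F := by
        rw [div_le_iff₀ (by positivity)]
        linear_combination (2 * 3 ^ d) * h_hole + (δ / 2) ^ (d + 1) * h_center

variable {n d : ℕ} {μ ν : Measure (EuclideanSpace ℝ (Fin n))} {x y : EuclideanSpace ℝ (Fin n)}
  {r δ m : ℝ}

lemma mul_holeConst_mul_le_FDist [Nontrivial (EuclideanSpace ℝ (Fin n))] (hr : 0 < r) (hδ : 0 < δ)
    (hδ_le : δ ≤ 3) (hyx : dist y x ≤ r) (hμ : μ (closedBall x (4 * r)) ≠ ∞)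
    (hm : m * r ^ d ≤ μ.real (closedBall x r)) (hole : μ (ball y (δ * r)) = 0)
    {K : ℝ≥0∞} (hK : K ≠ ∞) (hν : ∀ ρ, 0 ≤ ρ → ν (closedBall y ρ) = .ofReal (ρ ^ d) * K) :
    m * holeConst d δ * (4 * r) ^ (d + 1) ≤ FDist μ ν (closedBall x (4 * r)) := by
  have ν_ne_top (ρ : ℝ) (hρ : 0 ≤ ρ) : ν (closedBall y ρ) ≠ ∞ :=
    hν ρ hρ ▸ ENNReal.mul_ne_top ENNReal.ofReal_ne_top hK
  have ν_real (ρ : ℝ) (hρ : 0 ≤ ρ) : ν.real (closedBall y ρ) = ρ ^ d * K.toReal := by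
    rw [measureReal_def, hν ρ hρ, ENNReal.toReal_mul, ENNReal.toReal_ofReal (by positivity)]
  have hxy : dist x y ≤ r := dist_comm x y ▸ hyx
  have ν_ne_top' : ν (closedBall x (4 * r)) ≠ ∞ :=
    measure_ne_top_of_subset (closedBall_subset_closedBall' (by linarith))
      (ν_ne_top (5 * r) (by positivity))
  apply mul_holeConst_mul_le (k := K.toReal) hδ
  · have ball_subset : ball y (δ * r) ⊆ closedBall x (4 * r) :=
      ball_subset_closedBall.trans <| closedBall_subset_closedBall' <| by
        linarith [mul_le_mul_of_nonneg_right hδ_le hr.le]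
    calc (δ / 2) ^ (d + 1) * r ^ (d + 1) * K.toReal
        = δ * r / 2 * ν.real (closedBall y (δ * r / 2)) := by
          rw [ν_real _ (by positivity)]
          ring
      _ ≤ FDist μ ν (closedBall x (4 * r)) :=
          half_mul_measureReal_le_FDist_of_null isBounded_closedBall (closedBall_ne_univ _ _)
            hμ ν_ne_top' (mul_pos hδ hr) ball_subset hole
  · have ball_subset : ball x (2 * r) ⊆ closedBall x (4 * r) :=
      ball_subset_closedBall.trans (closedBall_subset_closedBall (by linarith))
    have ν_ball_le : ν.real (ball x (2 * r)) ≤ (3 * r) ^ d * K.toReal :=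
      ν_real (3 * r) (by positivity) ▸ measureReal_mono
        (ball_subset_closedBall.trans (closedBall_subset_closedBall' (by linarith)))
        (ν_ne_top _ (by positivity))
    calc m * r ^ (d + 1) - 2 * 3 ^ d * r ^ (d + 1) * K.toReal
        = r * (m * r ^ d) - 2 * r * ((3 * r) ^ d * K.toReal) := by ring
      _ ≤ r * μ.real (closedBall x r) - 2 * r * ν.real (ball x (2 * r)) := by gcongr
      _ = 2 * r / 2 * μ.real (closedBall x (2 * r / 2)) - 2 * r * ν.real (ball x (2 * r)) := by
          rw [mul_div_cancel_left₀ r two_ne_zero]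
      _ ≤ FDist μ ν (closedBall x (4 * r)) :=
          half_mul_measureReal_sub_le_FDist isBounded_closedBall (closedBall_ne_univ _ _)
            hμ ν_ne_top' (by positivity) ball_subset

end Hole

section Plane

open Module

lemma hausdorffMeasure_closedBall_inter_affineSubspace {E P : Type*} [NormedAddCommGroup E]
    [NormedSpace ℝ E] [MeasurableSpace E] [BorelSpace E] [MetricSpace P] [NormedAddTorsor E P]
    [MeasurableSpace P] [BorelSpace P] (V : AffineSubspace ℝ P) [FiniteDimensional ℝ V.direction]
    {y : P} (hy : y ∈ V) {ρ : ℝ} (hρ : 0 ≤ ρ) :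
    μH[finrank ℝ V.direction] (closedBall y ρ ∩ V) =
      ENNReal.ofReal (ρ ^ finrank ℝ V.direction) *
        μH[finrank ℝ V.direction] (closedBall (0 : V.direction) 1) := by
  let φ : V.direction → P := fun v ↦ (v : E) +ᵥ y
  have isometry_φ : Isometry φ := .of_dist_eq fun v w ↦ by
    rw [dist_vadd_cancel_right, Subtype.dist_eq]
  have range_φ : Set.range φ = V := by
    ext z
    refine ⟨?_, fun hz ↦ ⟨⟨z -ᵥ y, V.vsub_mem_direction hz hy⟩, vsub_vadd z y⟩⟩
    rintro ⟨v, rfl⟩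
    exact V.vadd_mem_of_mem_direction v.2 hy
  have φ_zero : φ 0 = y := zero_vadd E y
  rw [← range_φ, ← isometry_φ.hausdorffMeasure_preimage (.inl (Nat.cast_nonneg _)), ← φ_zero,
    isometry_φ.preimage_closedBall, Measure.addHaar_closedBall' _ _ hρ]

end Plane

section Alpha

variable {n d : ℕ} {μ : Measure (EuclideanSpace ℝ (Fin n))}
  {V : AffineSubspace ℝ (EuclideanSpace ℝ (Fin n))} {x y : EuclideanSpace ℝ (Fin n)}

lemma le_alphaV {a r : ℝ} (hr : 0 < r) (h : ∀ c : ℝ, 0 < c →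
      a * r ^ (d + 1) ≤ FDist μ (ENNReal.ofReal c • μH[(d : ℝ)].restrict V) (closedBall x r)) :
    a ≤ alphaV d μ x r V := by
  have rpow_eq : r ^ (-(d : ℝ) - 1) = (r ^ (d + 1))⁻¹ := by
    rw [← Real.rpow_natCast, ← Real.rpow_neg hr.le]
    congr 1
    push_cast
    ring
  rw [alphaV, rpow_eq, inv_mul_eq_div, le_div_iff₀ (by positivity)]
  refine le_csInf ⟨_, 1, one_pos, rfl⟩ ?_
  rintro _ ⟨c, hc, rfl⟩
  exact h c hc

theorem mul_holeConst_le_alphaV [Nontrivial (EuclideanSpace ℝ (Fin n))] {r δ m : ℝ} (hr : 0 < r)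
    (hδ : 0 < δ) (hδ_le : δ ≤ 3) (hμ : μ (closedBall x (4 * r)) ≠ ∞)
    (hm : m * r ^ d ≤ μ.real (closedBall x r)) (hV : Module.finrank ℝ V.direction = d) (hyV : y ∈ V)
    (hyx : dist y x ≤ r) (hole : μ (ball y (δ * r)) = 0) :
    m * holeConst d δ ≤ alphaV d μ x (4 * r) V := by
  subst hV
  have unitBall_ne_top : μH[Module.finrank ℝ V.direction] (closedBall (0 : V.direction) 1) ≠ ∞ :=
    measure_closedBall_lt_top.ne
  refine le_alphaV (by positivity) fun c _ ↦
    mul_holeConst_mul_le_FDist hr hδ hδ_le hyx hμ hm hole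
      (ENNReal.mul_ne_top (ENNReal.ofReal_ne_top (r := c)) unitBall_ne_top) fun ρ hρ ↦ ?_
  rw [Measure.smul_apply, Measure.restrict_apply measurableSet_closedBall,
    hausdorffMeasure_closedBall_inter_affineSubspace V hyV hρ, smul_eq_mul, mul_left_comm]

end Alpha

theorem stmt3_general {n d : ℕ} {C₁ δ : ℝ} (hδ : 0 < δ) {S : Set (EuclideanSpace ℝ (Fin n))}
    (hS : AhlforsRegular d C₁ S) {x : EuclideanSpace ℝ (Fin n)} (hx : x ∈ S) {r : ℝ} (hr : 0 < r)
    (hdiam : ENNReal.ofReal (4 * r) < ediam S) {V : AffineSubspace ℝ (EuclideanSpace ℝ (Fin n))}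
    (hV : Module.finrank ℝ V.direction = d) {y : EuclideanSpace ℝ (Fin n)} (hyV : y ∈ V)
    (hyx : dist y x ≤ r) (hyS : δ * r ≤ infDist y S) :
    C₁⁻¹ * holeConst d δ ≤ alphaV d (μH[(d : ℝ)].restrict S) x (4 * r) V := by
  have infDist_le : infDist y S ≤ dist y x := infDist_le_dist_of_mem hx
  have hδ_le : δ ≤ 1 := le_of_mul_le_mul_right (by linarith) hr
  have y_ne_x : y ≠ x := dist_pos.1 (by linarith [mul_pos hδ hr])
  have : Nontrivial (EuclideanSpace ℝ (Fin n)) := ⟨y, x, y_ne_x⟩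
  have restrict_closedBall (ρ : ℝ) :
      μH[(d : ℝ)].restrict S (closedBall x ρ) = μH[(d : ℝ)] (S ∩ closedBall x ρ) := by
    rw [Measure.restrict_apply measurableSet_closedBall, Set.inter_comm]
  have finite : μH[(d : ℝ)].restrict S (closedBall x (4 * r)) ≠ ∞ :=
    restrict_closedBall _ ▸
      ((hS x hx _ (by positivity) hdiam).2.trans_lt ENNReal.ofReal_lt_top).ne
  have lower : C₁⁻¹ * r ^ d ≤ (μH[(d : ℝ)].restrict S).real (closedBall x r) := by
    have r_lt_diam : ENNReal.ofReal r < ediam S :=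
      (ENNReal.ofReal_le_ofReal (by linarith)).trans_lt hdiam
    rw [← Real.rpow_natCast, measureReal_def, ← ENNReal.ofReal_le_iff_le_toReal
      (measure_ne_top_of_subset (closedBall_subset_closedBall (by linarith)) finite),
      restrict_closedBall]
    exact (hS x hx r hr r_lt_diam).1
  have hole : μH[(d : ℝ)].restrict S (ball y (δ * r)) = 0 := by
    have disjoint : Disjoint (ball y (δ * r)) S :=
      disjoint_ball_infDist.mono_left (ball_subset_ball hyS)
    rw [Measure.restrict_apply measurableSet_ball, disjoint.inter_eq, measure_empty]
  exact mul_holeConst_le_alphaV hr hδ (by linarith) finite lower hV hyV hyx hole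

/-- if `Σ` is Ahlfors `d`-regular with constant `C₁`, `x ∈ Σ`,
`0 < r < diam Σ / 100`, and `V` is a `d`-plane meeting `B(x,4r)` with a point
`y ∈ V ∩ B(x,r)` satisfying `dist(y,Σ) ≥ δr`, then `α_{H^d|_Σ}(x,4r,V) ≥ ε`
for some `ε = ε(d,C₁,δ) > 0`. -/
theorem stmt3 (d : ℕ) (C₁ δ : ℝ) (hC₁ : 1 ≤ C₁) (hδ0 : 0 < δ) (hδ1 : δ ≤ 1) :
    ∃ ε : ℝ, 0 < ε ∧
      ∀ (S : Set (EuclideanSpace ℝ (Fin (d+1)))), IsClosed S →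
        AhlforsRegular (d : ℝ) C₁ S →
        ∀ x ∈ S, ∀ r : ℝ, 0 < r → ENNReal.ofReal (100 * r) < EMetric.diam S →
          ∀ V : AffineSubspace ℝ (EuclideanSpace ℝ (Fin (d+1))),
            (V : Set (EuclideanSpace ℝ (Fin (d+1)))).Nonempty →
            Module.finrank ℝ V.direction = d →
            ((V : Set (EuclideanSpace ℝ (Fin (d+1)))) ∩ closedBall x (4 * r)).Nonempty →
            (∃ y ∈ (V : Set (EuclideanSpace ℝ (Fin (d+1)))) ∩ closedBall x r,
              δ * r ≤ infDist y S) →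
            ε ≤ alphaV d ((μH[(d : ℝ)]).restrict S) x (4 * r) V := by
  refine ⟨C₁⁻¹ * holeConst d δ, mul_pos (inv_pos.2 (by linarith)) (holeConst_pos d hδ0), ?_⟩
  rintro S - hS x hx r hr hdiam V - hV - ⟨y, ⟨hyV, hyx⟩, hyS⟩
  exact stmt3_general hδ0 hS hx hr ((ENNReal.ofReal_le_ofReal (by linarith)).trans_lt hdiam)
    hV hyV hyx hyS
end

section
/- Let n ≥ d ≥ 1 be integers, let E ⊆ ℝ^n be a Borel set such that the measure H^d|_E is locally finite, and let F ⊆ E be a d-rectifiable set. Then for H^d-almost every x ∈ F, lim_{r→0} α_{H^d|_E}(x,r) = 0. -/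
open MeasureTheory Metric Filter
open scoped ENNReal NNReal

open MeasureTheory Metric Filter
open scoped ENNReal

/-!
Write `μ = H^d|_E` and let `Γ = f '' s ⊆ E` be a piece on which `f` is bi-Lipschitz and
differentiable with injective derivative; such pieces cover `F` up to an `H^d`-null set, by
Rademacher's theorem and because the points with non-injective derivative have null image. A
1-Lipschitz function supported in `B(x, r)` is `O(r)`, so an error `o(r ^ d)` in mass costs
`o(r ^ (d + 1))` in `F_{B(x,r)}`. At a density point `x = f p` of `Γ` this lets us replace `μ` by
`μ|_Γ = f_* ν`, where `ν ≤ C H^d` lives in the parameter space. Replacing `f` by its affine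
approximation `a` at `p` moves points by `o(r)` and so costs `o(r) ν(B(p, O(r))) = o(r ^ (d + 1))`,
and at a Lebesgue point `p` of the density `θ` of `ν` we may replace `ν` by `θ(p) H^d`. What
remains, `a_* (θ(p) H^d)`, is a positive multiple of `H^d` on the tangent plane. No area formula is
needed, since the value of the multiple does not matter.
-/

section

open Set Module Topology Asymptotics

section Sard

variable {X Y : Type*} [NormedAddCommGroup X] [NormedSpace ℝ X] [FiniteDimensional ℝ X]
  [NormedAddCommGroup Y] [NormedSpace ℝ Y]

lemma exists_comp_eq_and_det_eq_of_not_injective {𝕜 V W : Type*} [Field 𝕜] [AddCommGroup V]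
    [Module 𝕜 V] [Module.Finite 𝕜 V] [AddCommGroup W] [Module 𝕜 W] {A : V →ₗ[𝕜] W}
    (hA : ¬ Function.Injective A) (s : 𝕜) :
    ∃ D : V →ₗ[𝕜] V, A ∘ₗ D = A ∧ LinearMap.det D = s := by
  obtain ⟨e, hAe, he⟩ : ∃ e, A e = 0 ∧ e ≠ 0 := by
    simpa [injective_iff_map_eq_zero] using hA
  obtain ⟨φ, hφ⟩ := Module.Projective.exists_dual_eq_one 𝕜 he
  refine ⟨LinearMap.transvection ((s - 1) • φ) e, ?_, ?_⟩
  · ext v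
    simp [LinearMap.transvection.apply, hAe]
  · simp [LinearMap.transvection.det, hφ]

variable [MeasurableSpace X] [BorelSpace X] [MeasurableSpace Y] [BorelSpace Y]

-- Stretching the domain along `ker A` leaves `A` unchanged, so it makes `S` as small as we like
-- without affecting the Lipschitz constant of the map.
lemma exists_hausdorffMeasure_image_le_of_not_injective {A : X →L[ℝ] Y}
    (hA : ¬ Function.Injective A) {ε : ℝ≥0} (hε : ε ≠ 0) :
    ∃ δ : ℝ≥0, δ ≠ 0 ∧ ∀ (g : X → Y) (S : Set X), ApproximatesLinearOn g A S δ →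
      μH[finrank ℝ X] (g '' S) ≤ ε * μH[finrank ℝ X] S := by
  set M : ℝ≥0 := ‖A‖₊ + 1
  have hs : M ^ finrank ℝ X / ε ≠ 0 := by positivity
  obtain ⟨D, hAD, hD⟩ := exists_comp_eq_and_det_eq_of_not_injective hA
    ((M ^ finrank ℝ X / ε : ℝ≥0) : ℝ)
  have hD0 : LinearMap.det D ≠ 0 := by rw [hD]; exact_mod_cast hs
  have hDsurj : Function.Surjective D := (LinearMap.equivOfDetNeZero D hD0).surjective
  set D' : X →L[ℝ] X := LinearMap.toContinuousLinearMap D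
  refine ⟨(‖D'‖₊ + 1)⁻¹, by positivity, fun g S hg ↦ ?_⟩
  have hlip : LipschitzOnWith M (g ∘ D) (D ⁻¹' S) := by
    have happ : ApproximatesLinearOn (g ∘ D) A (D ⁻¹' S) 1 := by
      intro x hx y hy
      have hx' : A (D x) = A x := LinearMap.congr_fun hAD x
      have hy' : A (D y) = A y := LinearMap.congr_fun hAD y
      calc ‖g (D x) - g (D y) - A (x - y)‖ = ‖g (D x) - g (D y) - A (D x - D y)‖ := by
            rw [map_sub, map_sub, hx', hy']
        _ ≤ ((‖D'‖₊ + 1)⁻¹ : ℝ≥0) * ‖D x - D y‖ := hg _ hx _ hy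
        _ ≤ ((‖D'‖₊ + 1)⁻¹ : ℝ≥0) * ((‖D'‖₊ + 1 : ℝ≥0) * ‖x - y‖) := by
            gcongr
            rw [← map_sub]
            refine (D'.le_opNorm _).trans ?_
            gcongr
            simp
        _ = (1 : ℝ≥0) * ‖x - y‖ := by
            rw [← mul_assoc, ← NNReal.coe_mul, inv_mul_cancel₀ (by positivity)]
    exact lipschitzOnWith_iff_restrict.2 happ.lipschitz
  calc μH[finrank ℝ X] (g '' S) = μH[finrank ℝ X] ((g ∘ D) '' (D ⁻¹' S)) := by
        rw [image_comp, image_preimage_eq S hDsurj]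
    _ ≤ M ^ (finrank ℝ X : ℝ) * μH[finrank ℝ X] (D ⁻¹' S) :=
        hlip.hausdorffMeasure_image_le (Nat.cast_nonneg _)
    _ = ε * μH[finrank ℝ X] S := by
        rw [Measure.addHaar_preimage_linearMap _ hD0, hD, ← mul_assoc, ← NNReal.coe_inv,
          NNReal.abs_eq, ENNReal.ofReal_coe_nnreal, ENNReal.rpow_natCast, ← ENNReal.coe_pow,
          ← ENNReal.coe_mul, inv_div, mul_div_cancel₀ _ (by positivity)]

variable [SecondCountableTopology Y]

lemma hausdorffMeasure_image_le_mul_of_not_injective_fderivWithin {f : X → Y} {s : Set X}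
    {f' : X → X →L[ℝ] Y} (hf' : ∀ x ∈ s, HasFDerivWithinAt f (f' x) s x)
    (hinj : ∀ x ∈ s, ¬ Function.Injective (f' x)) {ε : ℝ≥0} (hε : ε ≠ 0) :
    μH[finrank ℝ X] (f '' s) ≤ ε * μH[finrank ℝ X] s := by
  rcases s.eq_empty_or_nonempty with rfl | hne
  · simp
  have hex : ∀ A : X →L[ℝ] Y, ∃ δ : ℝ≥0, δ ≠ 0 ∧ (¬ Function.Injective A →
      ∀ (g : X → Y) (S : Set X), ApproximatesLinearOn g A S δ →
        μH[finrank ℝ X] (g '' S) ≤ ε * μH[finrank ℝ X] S) := by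
    intro A
    by_cases hA : Function.Injective A
    · exact ⟨1, one_ne_zero, fun h ↦ absurd hA h⟩
    · obtain ⟨δ, hδ0, hδ⟩ := exists_hausdorffMeasure_image_le_of_not_injective hA hε
      exact ⟨δ, hδ0, fun _ ↦ hδ⟩
  choose δ hδ0 hδ using hex
  obtain ⟨t, A, hdisj, htm, hcov, happ, hAf'⟩ :=
    exists_partition_approximatesLinearOn_of_hasFDerivWithinAt f s f' hf' δ hδ0
  calc μH[finrank ℝ X] (f '' s) ≤ μH[finrank ℝ X] (⋃ j, f '' (s ∩ t j)) := by
        rw [← image_iUnion, ← inter_iUnion, inter_eq_left.2 hcov]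
    _ ≤ ∑' j, μH[finrank ℝ X] (f '' (s ∩ t j)) := measure_iUnion_le _
    _ ≤ ∑' j, ε * μH[finrank ℝ X] (s ∩ t j) := by
        gcongr with j
        obtain ⟨y, hy, hAy⟩ := hAf' hne j
        exact hδ (A j) (hAy ▸ hinj y hy) f _ (happ j)
    _ = ε * μH[finrank ℝ X] s := by
        simp_rw [ENNReal.tsum_mul_left, inter_comm s, ← Measure.restrict_apply (htm _),
          ← measure_iUnion hdisj htm, Measure.restrict_apply (MeasurableSet.iUnion htm),
          inter_eq_right.2 hcov]

theorem hausdorffMeasure_image_eq_zero_of_not_injective_fderivWithin {f : X → Y} {s : Set X}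
    {f' : X → X →L[ℝ] Y} (hf' : ∀ x ∈ s, HasFDerivWithinAt f (f' x) s x)
    (hinj : ∀ x ∈ s, ¬ Function.Injective (f' x)) : μH[finrank ℝ X] (f '' s) = 0 := by
  suffices h : ∀ k : ℕ, μH[finrank ℝ X] (f '' (s ∩ closedBall 0 k)) = 0 by
    rw [← inter_univ s, ← iUnion_closedBall_nat (0 : X), inter_iUnion, image_iUnion,
      measure_iUnion_null_iff]
    exact h
  intro k
  have hfin : μH[finrank ℝ X] (s ∩ closedBall 0 (k : ℝ)) ≠ ∞ :=
    ((measure_mono inter_subset_right).trans_lt measure_closedBall_lt_top).ne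
  have hlim : Tendsto (fun ε : ℝ≥0 ↦ (ε : ℝ≥0∞) * μH[finrank ℝ X] (s ∩ closedBall 0 (k : ℝ)))
      (𝓝[≠] 0) (𝓝 0) := by
    simpa using ENNReal.Tendsto.mul_const
      ((ENNReal.continuous_coe.tendsto (0 : ℝ≥0)).mono_left nhdsWithin_le_nhds) (Or.inr hfin)
  refine le_antisymm (ge_of_tendsto hlim ?_) zero_le
  filter_upwards [self_mem_nhdsWithin] with ε hε
  exact hausdorffMeasure_image_le_mul_of_not_injective_fderivWithin
    (fun x hx ↦ (hf' x hx.1).mono inter_subset_left) (fun x hx ↦ hinj x hx.1) hε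

end Sard

section Antilipschitz

variable {X Y : Type*} [NormedAddCommGroup X] [NormedSpace ℝ X] [NormedAddCommGroup Y]
  [NormedSpace ℝ Y]

lemma exists_antilipschitzWith_domRestrict_of_approximatesLinearOn {A : X →L[ℝ] Y} {K : ℝ≥0}
    (hK : 0 < K) (hA : AntilipschitzWith K A) :
    ∃ δ : ℝ≥0, δ ≠ 0 ∧ ∀ (g : X → Y) (S : Set X), ApproximatesLinearOn g A S δ →
      ∃ M : ℝ≥0, AntilipschitzWith M (S.domRestrict g) := by
  refine ⟨K⁻¹ / 2, by positivity, fun g S hg ↦ ⟨(K⁻¹ - K⁻¹ / 2)⁻¹, ?_⟩⟩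
  convert! (hA.domRestrict S).add_lipschitzWith hg.lipschitz_sub
    (NNReal.half_lt_self (by positivity))
  simp [domRestrict]

lemma exists_closed_cover_antilipschitzWith [FiniteDimensional ℝ X] [SecondCountableTopology Y]
    {f : X → Y} {s : Set X} {f' : X → X →L[ℝ] Y}
    (hf' : ∀ x ∈ s, HasFDerivWithinAt f (f' x) s x)
    (hinj : ∀ x ∈ s, Function.Injective (f' x)) :
    ∃ t : ℕ → Set X, (∀ j, IsClosed (t j)) ∧ s ⊆ ⋃ j, t j ∧
      ∀ j, ∃ M : ℝ≥0, AntilipschitzWith M ((s ∩ t j).domRestrict f) := by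
  rcases s.eq_empty_or_nonempty with rfl | hne
  · exact ⟨fun _ ↦ ∅, fun _ ↦ isClosed_empty, empty_subset _, fun _ ↦ ⟨0, fun x ↦ x.2.1.elim⟩⟩
  have hex : ∀ A : X →L[ℝ] Y, ∃ δ : ℝ≥0, δ ≠ 0 ∧ (Function.Injective A → ∀ (g : X → Y) (S : Set X),
      ApproximatesLinearOn g A S δ → ∃ M : ℝ≥0, AntilipschitzWith M (S.domRestrict g)) := by
    intro A
    by_cases hA : Function.Injective A
    · obtain ⟨K, hK, hAK⟩ := A.injective_iff_antilipschitz.1 hA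
      obtain ⟨δ, hδ0, hδ⟩ := exists_antilipschitzWith_domRestrict_of_approximatesLinearOn hK hAK
      exact ⟨δ, hδ0, fun _ ↦ hδ⟩
    · exact ⟨1, one_ne_zero, fun h ↦ absurd h hA⟩
  choose δ hδ0 hδ using hex
  obtain ⟨t, A, htc, hcov, happ, hAf'⟩ :=
    exists_closed_cover_approximatesLinearOn_of_hasFDerivWithinAt f s f' hf' δ hδ0
  refine ⟨t, htc, hcov, fun j ↦ ?_⟩
  obtain ⟨y, hy, hAy⟩ := hAf' hne j
  exact hδ (A j) (hAy ▸ hinj y hy) f _ (happ j)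

end Antilipschitz

section FlatImage

variable {X Y : Type*} [NormedAddCommGroup X] [NormedSpace ℝ X] [FiniteDimensional ℝ X]
  [MeasurableSpace X] [BorelSpace X] [NormedAddCommGroup Y] [NormedSpace ℝ Y]
  [MeasurableSpace Y] [BorelSpace Y]

lemma exists_map_affine_addHaar_eq_smul_hausdorffMeasure (μ : Measure X) [μ.IsAddHaarMeasure]
    {A : X →L[ℝ] Y} (hA : Function.Injective A) (p : X) (q : Y) :
    ∃ c : ℝ≥0, 0 < c ∧ μ.map (fun y ↦ q + A (y - p)) = c • (μH[finrank ℝ X]).restrict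
      (AffineSubspace.mk' q (LinearMap.range (A : X →ₗ[ℝ] Y))) := by
  set W := LinearMap.range (A : X →ₗ[ℝ] Y)
  let e : X ≃L[ℝ] W := (LinearEquiv.ofInjective (A : X →ₗ[ℝ] Y) hA).toContinuousLinearEquiv
  have hW : finrank ℝ W = finrank ℝ X := e.toLinearEquiv.finrank_eq.symm
  have hHaar : (μH[finrank ℝ X] : Measure W).IsAddHaarMeasure := hW ▸ inferInstance
  have hmapHaar : (μ.map e).IsAddHaarMeasure := e.isAddHaarMeasure_map μ
  let i : W → Y := fun w ↦ q + w
  have hi : Isometry i := (IsometryEquiv.addLeft q).isometry.comp isometry_subtype_coe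
  have hrange : range i = (AffineSubspace.mk' q W : Set Y) := by
    ext y
    exact ⟨by rintro ⟨w, rfl⟩; simp [i], fun h ↦ ⟨⟨y - q, by simpa using h⟩, by simp [i]⟩⟩
  refine ⟨(μ.map e).addHaarScalarFactor μH[finrank ℝ X],
    Measure.addHaarScalarFactor_pos_of_isAddHaarMeasure _ _, ?_⟩
  calc μ.map (fun y ↦ q + A (y - p)) = ((μ.map fun y ↦ y - p).map e).map i := by
        rw [Measure.map_map hi.continuous.measurable e.continuous.measurable,
          Measure.map_map (hi.continuous.comp e.continuous).measurable (measurable_sub_const p)]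
        rfl
    _ = (((μ.map e).addHaarScalarFactor μH[finrank ℝ X]) • μH[finrank ℝ X]).map i := by
        rw [map_sub_right_eq_self, ← Measure.isAddLeftInvariant_eq_smul]
    _ = _ := by
        rw [Measure.map_smul, hi.map_hausdorffMeasure (Or.inl (Nat.cast_nonneg _)), hrange]

end FlatImage

lemma norm_le_of_lipschitzWith_of_support_subset_closedBall {Y E : Type*} [NormedAddCommGroup Y]
    [NormedSpace ℝ Y] [Nontrivial Y] [SeminormedAddCommGroup E] {K : ℝ≥0} {φ : Y → E}
    (hφ : LipschitzWith K φ) {x : Y} {r : ℝ} (hr : 0 < r)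
    (hsupp : Function.support φ ⊆ closedBall x r) (y : Y) : ‖φ y‖ ≤ K * (3 * r) := by
  by_cases hy : y ∈ closedBall x r
  · obtain ⟨v, hv⟩ := exists_norm_eq Y (c := 2 * r) (by positivity)
    have hφv : φ (x + v) = 0 := by
      refine Function.notMem_support.1 fun h ↦ ?_
      have := mem_closedBall.1 (hsupp h)
      rw [dist_self_add_left, hv] at this
      linarith
    have hdist : dist y (x + v) ≤ 3 * r := calc
      dist y (x + v) ≤ dist y x + dist x (x + v) := dist_triangle _ _ _
      _ ≤ r + 2 * r := add_le_add hy (by rw [dist_self_add_right, hv])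
      _ = 3 * r := by ring
    calc ‖φ y‖ = dist (φ y) (φ (x + v)) := by rw [hφv, dist_zero_right]
      _ ≤ K * dist y (x + v) := hφ.dist_le_mul _ _
      _ ≤ K * (3 * r) := by gcongr
  · rw [Function.notMem_support.1 (notMem_subset hsupp hy), norm_zero]
    positivity

lemma integral_map_eq_setIntegral_closedBall {X Y E : Type*} [PseudoMetricSpace X]
    [MeasurableSpace X] [PseudoMetricSpace Y] [MeasurableSpace Y] [NormedAddCommGroup E]
    [NormedSpace ℝ E] {ν : Measure X} {f : X → Y} (hf : Measurable f) {φ : Y → E} {p : X} {q : Y}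
    {m r : ℝ} (hφ : AEStronglyMeasurable φ (ν.map f))
    (hφs : Function.support φ ⊆ closedBall q r) (hm : 0 ≤ m)
    (hfm : ∀ᵐ y ∂ν, dist y p ≤ m * dist (f y) q) :
    ∫ z, φ z ∂ν.map f = ∫ y in closedBall p (m * r), φ (f y) ∂ν := by
  rw [integral_map hf.aemeasurable hφ, setIntegral_eq_integral_of_ae_compl_eq_zero]
  filter_upwards [hfm] with y hy hyp
  refine Function.notMem_support.1 fun hφy ↦ hyp (hy.trans ?_)
  gcongr
  exact hφs hφy

lemma isBigO_measureReal_closedBall {X : Type*} [NormedAddCommGroup X] [NormedSpace ℝ X]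
    [FiniteDimensional ℝ X] [MeasurableSpace X] [BorelSpace X] (μ : Measure X)
    [μ.IsAddHaarMeasure] (x : X) :
    (fun r ↦ μ.real (closedBall x r)) =O[𝓝[>] 0] fun r ↦ r ^ finrank ℝ X := by
  refine IsBigO.of_bound (μ.real (closedBall 0 1)) ?_
  filter_upwards [self_mem_nhdsWithin] with r hr
  rw [Measure.addHaar_real_closedBall' μ x (le_of_lt hr), norm_mul, mul_comm,
    Real.norm_of_nonneg measureReal_nonneg]

/-- `F_{B(x,r)}(μ, ν) = o(r ^ (d + 1))` as `r → 0⁺`: near `x`, the measures `μ` and `ν` are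
indistinguishable at the scale-invariant resolution at which `α_μ` compares measures of dimension
`d`. Test functions of either sign are allowed, and the bound is on each of them rather than on
their supremum, which could take its junk value. -/
def IsAsymptoticAt {Y : Type*} [PseudoMetricSpace Y] [MeasurableSpace Y] (d : ℕ)
    (μ ν : Measure Y) (x : Y) : Prop :=
  ∀ ε > 0, ∀ᶠ r : ℝ in 𝓝[>] 0, ∀ φ : Y → ℝ, LipschitzWith 1 φ →
    Function.support φ ⊆ closedBall x r → |∫ y, φ y ∂μ - ∫ y, φ y ∂ν| ≤ ε * r ^ (d + 1)

namespace IsAsymptoticAt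

section Metric

variable {X Y : Type*} [PseudoMetricSpace Y] [MeasurableSpace Y] {d : ℕ} {μ ν ρ : Measure Y}
  {x : Y}

lemma of_isLittleO {g : ℝ → ℝ} (hg : g =o[𝓝[>] 0] fun r ↦ r ^ (d + 1))
    (h : ∀ᶠ r : ℝ in 𝓝[>] 0, ∀ φ : Y → ℝ, LipschitzWith 1 φ →
      Function.support φ ⊆ closedBall x r → |∫ y, φ y ∂μ - ∫ y, φ y ∂ν| ≤ g r) :
    IsAsymptoticAt d μ ν x := by
  intro ε hε
  filter_upwards [h, hg.def hε, self_mem_nhdsWithin] with r hr hgr hr0 φ hφ hφs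
  rw [Real.norm_of_nonneg (pow_nonneg (le_of_lt hr0) _)] at hgr
  exact (hr φ hφ hφs).trans ((le_abs_self _).trans hgr)

protected lemma trans (h₁ : IsAsymptoticAt d μ ν x) (h₂ : IsAsymptoticAt d ν ρ x) :
    IsAsymptoticAt d μ ρ x := by
  intro ε hε
  filter_upwards [h₁ _ (half_pos hε), h₂ _ (half_pos hε)] with r hr₁ hr₂ φ hφ hφs
  calc |∫ y, φ y ∂μ - ∫ y, φ y ∂ρ|
      ≤ |∫ y, φ y ∂μ - ∫ y, φ y ∂ν| + |∫ y, φ y ∂ν - ∫ y, φ y ∂ρ| := abs_sub_le _ _ _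
    _ ≤ ε / 2 * r ^ (d + 1) + ε / 2 * r ^ (d + 1) :=
        add_le_add (hr₁ φ hφ hφs) (hr₂ φ hφ hφs)
    _ = ε * r ^ (d + 1) := by ring

lemma eventually_of_lipschitzWith (h : IsAsymptoticAt d μ ν x) (K : ℝ≥0) {ε : ℝ} (hε : 0 < ε) :
    ∀ᶠ r : ℝ in 𝓝[>] 0, ∀ φ : Y → ℝ, LipschitzWith K φ → Function.support φ ⊆ closedBall x r →
      |∫ y, φ y ∂μ - ∫ y, φ y ∂ν| ≤ ε * r ^ (d + 1) := by
  have hk : (0 : ℝ) < K + 1 := by positivity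
  filter_upwards [h (ε / (K + 1)) (by positivity)] with r hr φ hφ hφs
  have hψ : LipschitzWith 1 fun y ↦ (K + 1 : ℝ)⁻¹ * φ y := by
    refine LipschitzWith.of_dist_le_mul fun y z ↦ ?_
    rw [← smul_eq_mul, ← smul_eq_mul, dist_smul₀, norm_inv, Real.norm_of_nonneg hk.le,
      inv_mul_le_iff₀ hk, NNReal.coe_one, one_mul]
    refine (hφ.dist_le_mul y z).trans ?_
    gcongr
    simp
  have hψs : Function.support (fun y ↦ (K + 1 : ℝ)⁻¹ * φ y) ⊆ closedBall x r := fun y hy ↦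
    hφs (right_ne_zero_of_mul hy)
  have key := hr _ hψ hψs
  rw [integral_const_mul, integral_const_mul, ← mul_sub, abs_mul, abs_of_pos (inv_pos.2 hk),
    inv_mul_le_iff₀ hk] at key
  exact key.trans_eq (by field_simp)

protected lemma map [OpensMeasurableSpace Y] [PseudoMetricSpace X] [MeasurableSpace X]
    [BorelSpace X] (h : IsAsymptoticAt d μ ν x) {a : Y → X} {K m : ℝ≥0}
    (ha : LipschitzWith K a) (ha' : AntilipschitzWith m a) :
    IsAsymptoticAt d (μ.map a) (ν.map a) (a x) := by
  intro ε hε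
  have hm : (0 : ℝ) < m + 1 := by positivity
  filter_upwards [eventually_nhdsGT_zero_mul_left hm
      (h.eventually_of_lipschitzWith K (ε := ε / (m + 1) ^ (d + 1)) (by positivity))]
    with r hr φ hφ hφs
  have hsupp : Function.support (φ ∘ a) ⊆ closedBall x ((m + 1) * r) := fun y hy ↦ calc
    dist y x ≤ m * dist (a y) (a x) := ha'.le_mul_dist y x
    _ ≤ (m + 1) * r := by
        gcongr
        · simp
        · exact hφs hy
  rw [integral_map ha.continuous.aemeasurable hφ.continuous.aestronglyMeasurable,
    integral_map ha.continuous.aemeasurable hφ.continuous.aestronglyMeasurable]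
  refine (hr (φ ∘ a) (by simpa using hφ.comp ha) hsupp).trans_eq ?_
  rw [mul_pow]
  field_simp

end Metric

section Normed

variable {Y : Type*} [NormedAddCommGroup Y] [NormedSpace ℝ Y] [Nontrivial Y]
  [MeasurableSpace Y] [BorelSpace Y] {d : ℕ}

lemma restrict_of_isLittleO [ProperSpace Y] {μ : Measure Y} [IsLocallyFiniteMeasure μ] {Γ : Set Y}
    (hΓ : MeasurableSet Γ) {x : Y}
    (h : (fun r ↦ μ.real (Γᶜ ∩ closedBall x r)) =o[𝓝[>] 0] fun r ↦ r ^ d) :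
    IsAsymptoticAt d μ (μ.restrict Γ) x := by
  have hg : (fun r ↦ 3 * r * μ.real (Γᶜ ∩ closedBall x r)) =o[𝓝[>] 0] fun r ↦ r ^ (d + 1) := by
    simp_rw [pow_succ', mul_assoc]
    exact ((isBigO_refl _ _).mul_isLittleO h).const_mul_left 3
  refine of_isLittleO hg ?_
  filter_upwards [self_mem_nhdsWithin] with r hr φ hφ hφs
  have hint : Integrable φ μ := hφ.continuous.integrable_of_hasCompactSupport <|
    HasCompactSupport.of_support_subset_isCompact (isCompact_closedBall x r) hφs
  calc |∫ y, φ y ∂μ - ∫ y in Γ, φ y ∂μ| = ‖∫ y in Γᶜ ∩ closedBall x r, φ y ∂μ‖ := by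
        rw [← integral_add_compl hΓ hint, add_sub_cancel_left, Real.norm_eq_abs,
          setIntegral_eq_of_subset_of_forall_sdiff_eq_zero hΓ.compl inter_subset_left
          fun y hy ↦ Function.notMem_support.1 fun h ↦ hy.2 ⟨hy.1, hφs h⟩]
    _ ≤ (1 : ℝ≥0) * (3 * r) * μ.real (Γᶜ ∩ closedBall x r) :=
        norm_setIntegral_le_of_norm_le_const
          ((measure_mono inter_subset_right).trans_lt measure_closedBall_lt_top)
          fun y _ ↦ norm_le_of_lipschitzWith_of_support_subset_closedBall hφ hr hφs y
    _ = 3 * r * μ.real (Γᶜ ∩ closedBall x r) := by simp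

lemma map_map_of_isLittleO {X : Type*} [NormedAddCommGroup X] [ProperSpace X] [MeasurableSpace X]
    {ν : Measure X} [IsLocallyFiniteMeasure ν] {p : X} {q : Y} {f g : X → Y}
    (hf : Measurable f) (hg : Measurable g)
    (hfg : (fun y ↦ f y - g y) =o[𝓝 p] fun y ↦ y - p) {m : ℝ} (hm : 0 < m)
    (hfm : ∀ᵐ y ∂ν, dist y p ≤ m * dist (f y) q) (hgm : ∀ᵐ y ∂ν, dist y p ≤ m * dist (g y) q)
    (hν : (fun r ↦ ν.real (closedBall p r)) =O[𝓝[>] 0] fun r ↦ r ^ d) :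
    IsAsymptoticAt d (ν.map f) (ν.map g) q := by
  intro ε hε
  obtain ⟨C, hC, hνC⟩ := hν.exists_pos
  obtain ⟨s, hs, hfgs⟩ := Metric.nhds_basis_closedBall.eventually_iff.1
    (hfg.def (c := ε / (C * m ^ (d + 1))) (by positivity))
  filter_upwards [eventually_nhdsGT_zero_mul_left hm hνC.bound,
    eventually_nhdsGT_zero_mul_left hm (Ioc_mem_nhdsGT hs),
    self_mem_nhdsWithin] with r hνr hrs hr φ hφ hφs
  have hr0 : 0 < r := hr
  have hφm : Measurable φ := hφ.continuous.measurable
  have hint : ∀ {u : X → Y}, Measurable u →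
      IntegrableOn (fun y ↦ φ (u y)) (closedBall p (m * r)) ν := fun hu ↦
    Measure.integrableOn_of_bounded measure_closedBall_lt_top.ne
      (hφm.comp hu).aestronglyMeasurable
      (ae_of_all _ fun y ↦ norm_le_of_lipschitzWith_of_support_subset_closedBall hφ hr0 hφs _)
  have hbound : ∀ y ∈ closedBall p (m * r),
      ‖φ (f y) - φ (g y)‖ ≤ ε / (C * m ^ (d + 1)) * (m * r) := fun y hy ↦ calc
    ‖φ (f y) - φ (g y)‖ ≤ ‖f y - g y‖ := by
        simpa [dist_eq_norm] using hφ.dist_le_mul (f y) (g y)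
    _ ≤ ε / (C * m ^ (d + 1)) * ‖y - p‖ := hfgs (closedBall_subset_closedBall hrs.2 hy)
    _ ≤ ε / (C * m ^ (d + 1)) * (m * r) := by
        gcongr
        exact mem_closedBall_iff_norm.1 hy
  calc |∫ y, φ y ∂ν.map f - ∫ y, φ y ∂ν.map g|
      = ‖∫ y in closedBall p (m * r), (φ (f y) - φ (g y)) ∂ν‖ := by
        rw [integral_map_eq_setIntegral_closedBall hf hφm.aestronglyMeasurable hφs hm.le hfm,
          integral_map_eq_setIntegral_closedBall hg hφm.aestronglyMeasurable hφs hm.le hgm,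
          ← integral_sub (hint hf) (hint hg), Real.norm_eq_abs]
    _ ≤ ε / (C * m ^ (d + 1)) * (m * r) * ν.real (closedBall p (m * r)) :=
        norm_setIntegral_le_of_norm_le_const measure_closedBall_lt_top hbound
    _ ≤ ε / (C * m ^ (d + 1)) * (m * r) * (C * (m * r) ^ d) := by
        rw [Real.norm_of_nonneg (by positivity), Real.norm_of_nonneg (by positivity)] at hνr
        gcongr
    _ = ε * r ^ (d + 1) := by
        rw [pow_succ, pow_succ, mul_pow]
        field_simp

lemma smul_of_tendsto_average [FiniteDimensional ℝ Y] {μ ν : Measure Y} [IsLocallyFiniteMeasure ν]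
    [μ.IsAddHaarMeasure] (hνμ : ν ≪ μ) {x : Y}
    (h : Tendsto (fun r ↦ ⨍ y in closedBall x r,
      ‖(ν.rnDeriv μ y).toReal - (ν.rnDeriv μ x).toReal‖ ∂μ) (𝓝[>] 0) (𝓝 0)) :
    IsAsymptoticAt (finrank ℝ Y) ν (ν.rnDeriv μ x • μ) x := by
  set θ : Y → ℝ := fun y ↦ (ν.rnDeriv μ y).toReal
  have hg : (fun r ↦ 3 * r * ∫ y in closedBall x r, ‖θ y - θ x‖ ∂μ) =o[𝓝[>] 0]
      fun r ↦ r ^ (finrank ℝ Y + 1) := by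
    have hball := (isBigO_measureReal_closedBall μ x).mul_isLittleO ((isLittleO_one_iff ℝ).2 h)
    simp_rw [← smul_eq_mul (μ.real _), measure_smul_setAverage _ measure_closedBall_lt_top.ne,
      mul_one] at hball
    simp_rw [pow_succ', mul_assoc]
    exact ((isBigO_refl _ _).mul_isLittleO hball).const_mul_left 3
  refine of_isLittleO hg ?_
  filter_upwards [self_mem_nhdsWithin] with r hr φ hφ hφs
  have hφb := norm_le_of_lipschitzWith_of_support_subset_closedBall hφ hr hφs
  have hcs : HasCompactSupport φ :=
    HasCompactSupport.of_support_subset_isCompact (isCompact_closedBall x r) hφs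
  have hφμ : Integrable φ μ := hφ.continuous.integrable_of_hasCompactSupport hcs
  have hφν : Integrable φ ν := hφ.continuous.integrable_of_hasCompactSupport hcs
  have hθ : IntegrableOn (fun y ↦ ‖θ y - θ x‖) (closedBall x r) μ :=
    ((Measure.integrableOn_toReal_rnDeriv measure_closedBall_lt_top.ne).sub
      (integrableOn_const measure_closedBall_lt_top.ne)).norm
  have hθφ : Integrable (fun y ↦ θ y * φ y) μ := (integrable_rnDeriv_smul_iff hνμ).2 hφν
  calc |∫ y, φ y ∂ν - ∫ y, φ y ∂(ν.rnDeriv μ x • μ)|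
      = ‖∫ y in closedBall x r, (θ y - θ x) * φ y ∂μ‖ := by
        rw [setIntegral_eq_integral_of_forall_compl_eq_zero fun y hy ↦ by
            rw [Function.notMem_support.1 (notMem_subset hφs hy), mul_zero],
          ← integral_rnDeriv_smul hνμ, integral_smul_measure, ← integral_smul, Real.norm_eq_abs]
        simp_rw [sub_mul]
        rw [integral_sub hθφ (hφμ.const_mul _)]
        rfl
    _ ≤ ∫ y in closedBall x r, (1 : ℝ≥0) * (3 * r) * ‖θ y - θ x‖ ∂μ := by
        refine norm_integral_le_of_norm_le (hθ.const_mul _) (ae_of_all _ fun y ↦ ?_)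
        rw [norm_mul, mul_comm]
        gcongr
        exact hφb y
    _ = 3 * r * ∫ y in closedBall x r, ‖θ y - θ x‖ ∂μ := by
        rw [integral_const_mul, NNReal.coe_one, one_mul]

end Normed

end IsAsymptoticAt

section AlphaNumbers

variable {d n : ℕ} {μ : Measure (EuclideanSpace ℝ (Fin n))} {x : EuclideanSpace ℝ (Fin n)}
  {r : ℝ} {V : AffineSubspace ℝ (EuclideanSpace ℝ (Fin n))}

lemma FDist_nonneg (μ ν : Measure (EuclideanSpace ℝ (Fin n))) (B : Set (EuclideanSpace ℝ (Fin n))) :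
    0 ≤ FDist μ ν B := by
  refine Real.sSup_nonneg ?_
  rintro _ ⟨f, -, -, -, rfl⟩
  exact abs_nonneg _

lemma alphaV_nonneg (hr : 0 ≤ r) : 0 ≤ alphaV d μ x r V := by
  refine mul_nonneg (Real.rpow_nonneg hr _) (Real.sInf_nonneg ?_)
  rintro _ ⟨c, -, rfl⟩
  exact FDist_nonneg _ _ _

lemma alphaA_nonneg (hr : 0 ≤ r) : 0 ≤ alphaA d μ x r := by
  refine Real.sInf_nonneg ?_
  rintro _ ⟨V, -, -, rfl⟩
  exact alphaV_nonneg hr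

lemma alphaA_le_alphaV (hr : 0 ≤ r) (hV : (V : Set (EuclideanSpace ℝ (Fin n))).Nonempty)
    (hVd : finrank ℝ V.direction = d) : alphaA d μ x r ≤ alphaV d μ x r V := by
  refine csInf_le ⟨0, ?_⟩ ⟨V, hV, hVd, rfl⟩
  rintro _ ⟨W, -, -, rfl⟩
  exact alphaV_nonneg hr

lemma alphaV_le {c : ℝ≥0∞} (hc : c ≠ 0) (hc' : c ≠ ∞) {b : ℝ} (hb : 0 ≤ b) (hr : 0 < r)
    (h : ∀ φ : EuclideanSpace ℝ (Fin n) → ℝ, LipschitzWith 1 φ →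
      Function.support φ ⊆ closedBall x r →
        |∫ y, φ y ∂μ - ∫ y, φ y ∂(c • (μH[d]).restrict V)| ≤ b * r ^ (d + 1)) :
    alphaV d μ x r V ≤ b := by
  have hF : FDist μ (c • (μH[d]).restrict V) (closedBall x r) ≤ b * r ^ (d + 1) := by
    refine Real.sSup_le ?_ (by positivity)
    rintro _ ⟨φ, hφ, -, hφs, rfl⟩
    exact h φ hφ hφs
  have hr' : r ^ (-(d : ℝ) - 1) * r ^ (d + 1) = 1 := by
    rw [← Real.rpow_natCast, ← Real.rpow_add hr]
    simp
  calc alphaV d μ x r V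
      ≤ r ^ (-(d : ℝ) - 1) * FDist μ (c • (μH[d]).restrict V) (closedBall x r) := by
        refine mul_le_mul_of_nonneg_left
          (csInf_le ⟨0, ?_⟩ ⟨c.toReal, ENNReal.toReal_pos hc hc', ?_⟩) (Real.rpow_nonneg hr.le _)
        · rintro _ ⟨c', -, rfl⟩
          exact FDist_nonneg _ _ _
        · rw [ENNReal.ofReal_toReal hc']
    _ ≤ r ^ (-(d : ℝ) - 1) * (b * r ^ (d + 1)) := by gcongr
    _ = b := by rw [mul_left_comm, hr', mul_one]

lemma IsAsymptoticAt.tendsto_alphaA {c : ℝ≥0∞} (hc : c ≠ 0) (hc' : c ≠ ∞)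
    (hV : (V : Set (EuclideanSpace ℝ (Fin n))).Nonempty) (hVd : finrank ℝ V.direction = d)
    (h : IsAsymptoticAt d μ (c • (μH[d]).restrict V) x) :
    Tendsto (alphaA d μ x) (𝓝[>] 0) (𝓝 0) := by
  rw [Metric.nhds_basis_closedBall.tendsto_right_iff]
  intro ε hε
  filter_upwards [h ε hε, self_mem_nhdsWithin] with r hr (hr0 : 0 < r)
  rw [mem_closedBall, Real.dist_0_eq_abs, abs_of_nonneg (alphaA_nonneg hr0.le)]
  exact (alphaA_le_alphaV hr0.le hV hVd).trans (alphaV_le hc hc' hε.le hr0 hr)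

end AlphaNumbers

section ComapOn

variable {X Y : Type*} [MeasurableSpace X] [MeasurableSpace Y] {f : X → Y} {s : Set X}
  {μ : Measure Y}

/-- The pullback of `μ` under the restriction of `f` to `s`, as a measure on the whole domain of
`f`. It is meaningful when that restriction is a measurable embedding; it then represents
`μ.restrict (f '' s)` in the parameter space. -/
noncomputable def comapOn (f : X → Y) (s : Set X) (μ : Measure Y) : Measure X :=
  (μ.comap (s.domRestrict f)).map Subtype.val

lemma comapOn_apply (hs : MeasurableSet s) (hf : MeasurableEmbedding (s.domRestrict f))
    (t : Set X) : comapOn f s μ t = μ (f '' (s ∩ t)) := by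
  rw [comapOn, (MeasurableEmbedding.subtype_coe hs).map_apply, hf.comap_apply,
    image_domRestrict, inter_comm]

lemma ae_comapOn_mem (hs : MeasurableSet s) (hf : MeasurableEmbedding (s.domRestrict f)) :
    ∀ᵐ y ∂comapOn f s μ, y ∈ s := by
  rw [ae_iff, comapOn_apply hs hf, ← compl_def, inter_compl_self, image_empty, measure_empty]

lemma ae_restrict_image_of_ae_comapOn (hs : MeasurableSet s)
    (hf : MeasurableEmbedding (s.domRestrict f)) {P : Y → Prop}
    (h : ∀ᵐ y ∂comapOn f s μ, P (f y)) : ∀ᵐ x ∂μ.restrict (f '' s), P x := by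
  have hfs : MeasurableSet (f '' s) := by
    rw [← range_domRestrict]
    exact hf.measurableSet_range
  rw [ae_iff, comapOn_apply hs hf] at h
  rw [ae_restrict_iff' hfs, ae_iff]
  refine measure_mono_null (fun x hx ↦ ?_) h
  obtain ⟨⟨y, hy, rfl⟩, hP⟩ := Classical.not_imp.1 hx
  exact mem_image_of_mem f ⟨hy, hP⟩

lemma map_comapOn (hs : MeasurableSet s) (hf : MeasurableEmbedding (s.domRestrict f))
    (hfm : Measurable f) : (comapOn f s μ).map f = μ.restrict (f '' s) := by
  ext t ht
  rw [Measure.map_apply hfm ht, comapOn_apply hs hf, image_inter_preimage, inter_comm,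
    Measure.restrict_apply ht]

end ComapOn

lemma comapOn_hausdorffMeasure_le {X Y : Type*} [EMetricSpace X] [MeasurableSpace X] [BorelSpace X]
    [EMetricSpace Y] [MeasurableSpace Y] [BorelSpace Y] {f : X → Y} {s : Set X}
    (hs : MeasurableSet s) (hfs : MeasurableEmbedding (s.domRestrict f)) {K : ℝ≥0}
    (hf : LipschitzWith K f) {d : ℝ} (hd : 0 ≤ d) : comapOn f s μH[d] ≤ K ^ d • μH[d] := by
  refine Measure.le_iff.2 fun t _ ↦ ?_
  calc comapOn f s μH[d] t = μH[d] (f '' (s ∩ t)) := comapOn_apply hs hfs t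
    _ ≤ μH[d] (f '' t) := measure_mono (image_mono inter_subset_right)
    _ ≤ K ^ d * μH[d] t := hf.hausdorffMeasure_image_le hd t
    _ = (K ^ d • μH[d] : Measure X) t := by
        rw [Measure.smul_apply, Measure.nnreal_smul_coe_apply, ENNReal.coe_rpow_of_nonneg _ hd]

section Density

variable {Y : Type*} [PseudoMetricSpace Y] [MeasurableSpace Y] {μ : Measure Y} {g : ℝ → ℝ}

lemma isBigO_measureReal_closedBall_of_le {ν : Measure Y} [ProperSpace Y]
    [IsLocallyFiniteMeasure μ] {C : ℝ≥0} (hνμ : ν ≤ C • μ) {x : Y}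
    (h : (fun r ↦ μ.real (closedBall x r)) =O[𝓝[>] 0] g) :
    (fun r ↦ ν.real (closedBall x r)) =O[𝓝[>] 0] g := by
  refine (IsBigO.of_bound C (.of_forall fun r ↦ ?_)).trans h
  rw [Real.norm_of_nonneg measureReal_nonneg, Real.norm_of_nonneg measureReal_nonneg]
  have hfin : (C • μ) (closedBall x r) ≠ ∞ := measure_closedBall_lt_top.ne
  exact (ENNReal.toReal_mono hfin (hνμ _)).trans_eq (measureReal_nnreal_smul_apply C)

lemma isBigO_measureReal_map_closedBall {X : Type*} [PseudoMetricSpace X] [ProperSpace X]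
    [MeasurableSpace X] [OpensMeasurableSpace Y] {ν : Measure X} [IsLocallyFiniteMeasure ν]
    {f : X → Y} (hf : Measurable f) {p : X} {q : Y} {m : ℝ} (hm : 0 < m)
    (hfm : ∀ᵐ y ∂ν, dist y p ≤ m * dist (f y) q) {d : ℕ}
    (hν : (fun r ↦ ν.real (closedBall p r)) =O[𝓝[>] 0] fun r ↦ r ^ d) :
    (fun r ↦ (ν.map f).real (closedBall q r)) =O[𝓝[>] 0] fun r ↦ r ^ d := by
  have hscale : (fun r ↦ ν.real (closedBall p (m * r))) =O[𝓝[>] 0] fun r ↦ r ^ d := by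
    refine (hν.comp_tendsto (tendsto_iff_comap.2 (comap_mulLeft_nhdsGT_zero hm).ge)).trans ?_
    simp only [Function.comp_def, mul_pow]
    exact isBigO_const_mul_self _ _ _
  refine (IsBigO.of_norm_le fun r ↦ ?_).trans hscale
  rw [Real.norm_of_nonneg measureReal_nonneg,
    map_measureReal_apply hf isClosed_closedBall.measurableSet]
  refine ENNReal.toReal_mono measure_closedBall_lt_top.ne (measure_mono_ae ?_)
  filter_upwards [hfm] with y hy hyq
  refine hy.trans ?_
  gcongr
  exact hyq

lemma isLittleO_measureReal_compl_inter_closedBall [ProperSpace Y] [IsLocallyFiniteMeasure μ]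
    {Γ : Set Y} (hΓ : MeasurableSet Γ) {x : Y}
    (h : Tendsto (fun r ↦ μ (Γᶜ ∩ closedBall x r) / μ (closedBall x r)) (𝓝[>] 0) (𝓝 0))
    (hg : (fun r ↦ (μ.restrict Γ).real (closedBall x r)) =O[𝓝[>] 0] g) :
    (fun r ↦ μ.real (Γᶜ ∩ closedBall x r)) =o[𝓝[>] 0] g := by
  have ho : (fun r ↦ μ.real (Γᶜ ∩ closedBall x r)) =o[𝓝[>] 0]
      fun r ↦ μ.real (closedBall x r) := by
    refine isLittleO_of_tendsto (fun r hr ↦ ?_) ?_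
    · exact measureReal_mono_null inter_subset_right hr measure_closedBall_lt_top.ne
    · simpa only [Function.comp_def, ENNReal.toReal_div, ENNReal.toReal_zero, measureReal_def] using
        (ENNReal.tendsto_toReal ENNReal.zero_ne_top).comp h
  have hsub : (fun r ↦ μ.real (closedBall x r) - μ.real (Γᶜ ∩ closedBall x r)) =
      fun r ↦ (μ.restrict Γ).real (closedBall x r) := by
    ext r
    rw [measureReal_restrict_apply' hΓ, sub_eq_iff_eq_add, inter_comm Γᶜ, ← Set.sdiff_eq,
      measureReal_inter_add_sdiff hΓ measure_closedBall_lt_top.ne]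
  exact ho.trans_isBigO (ho.right_isBigO_sub.trans (hsub ▸ hg))

end Density

section TangentPlane

variable {X Y : Type*} [NormedAddCommGroup X] [NormedSpace ℝ X] [FiniteDimensional ℝ X]
  [Nontrivial X] [MeasurableSpace X] [BorelSpace X] [NormedAddCommGroup Y] [NormedSpace ℝ Y]
  [MeasurableSpace Y] [BorelSpace Y]

lemma isAsymptoticAt_map_smul_map_affine {μ ν : Measure X} [μ.IsAddHaarMeasure] {C : ℝ≥0}
    (hνμ : ν ≤ C • μ) {f : X → Y} (hf : Measurable f) {p : X} {A : X →L[ℝ] Y}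
    (hA : HasFDerivAt f A p) (hAinj : Function.Injective A) {m : ℝ}
    (hfm : ∀ᵐ y ∂ν, dist y p ≤ m * dist (f y) (f p))
    (hp : Tendsto (fun r ↦ ⨍ y in closedBall p r,
      ‖(ν.rnDeriv μ y).toReal - (ν.rnDeriv μ p).toReal‖ ∂μ) (𝓝[>] 0) (𝓝 0)) :
    IsAsymptoticAt (finrank ℝ X) (ν.map f)
      (ν.rnDeriv μ p • μ.map fun y ↦ f p + A (y - p)) (f p) := by
  have : ProperSpace X := FiniteDimensional.proper ℝ X
  have : Nontrivial Y := hAinj.nontrivial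
  have hac : ν ≪ μ := (Measure.absolutelyContinuous_of_le hνμ).trans
    Measure.smul_absolutelyContinuous
  have : IsLocallyFiniteMeasure ν := Measure.isLocallyFiniteMeasure_of_le hνμ
  obtain ⟨k, hk, hAk⟩ := A.injective_iff_antilipschitz.1 hAinj
  set a : X → Y := fun y ↦ f p + A (y - p)
  have ha_lip : LipschitzWith ‖A‖₊ a := LipschitzWith.of_dist_le_mul fun y z ↦ by
    simpa [a] using A.lipschitz.dist_le_mul (y - p) (z - p)
  have ha_anti : AntilipschitzWith k a := AntilipschitzWith.of_le_mul_dist fun y z ↦ by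
    simpa [a] using hAk.le_mul_dist (y - p) (z - p)
  have hap : a p = f p := by simp [a]
  have hfa : IsAsymptoticAt (finrank ℝ X) (ν.map f) (ν.map a) (f p) := by
    refine .map_map_of_isLittleO (m := max m k) hf ha_lip.continuous.measurable ?_
      (lt_max_of_lt_right (by exact_mod_cast hk)) ?_ (ae_of_all _ fun y ↦ ?_)
      (isBigO_measureReal_closedBall_of_le hνμ (isBigO_measureReal_closedBall μ p))
    · simpa only [a, sub_sub] using hA.isLittleO
    · filter_upwards [hfm] with y hy
      exact hy.trans (by gcongr; exact le_max_left _ _)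
    · rw [← hap]
      exact (ha_anti.le_mul_dist y p).trans (by gcongr; exact le_max_right _ _)
  have hμ := (IsAsymptoticAt.smul_of_tendsto_average hac hp).map ha_lip ha_anti
  rw [hap, Measure.map_smul] at hμ
  exact hfa.trans hμ

theorem exists_isAsymptoticAt_smul_hausdorffMeasure_tangent {μ ν : Measure X}
    [μ.IsAddHaarMeasure] {C : ℝ≥0} (hνμ : ν ≤ C • μ) [ProperSpace Y] {ρ : Measure Y}
    [IsLocallyFiniteMeasure ρ] {Γ : Set Y} (hΓ : MeasurableSet Γ) {f : X → Y} (hf : Measurable f)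
    (hmap : ν.map f = ρ.restrict Γ) {p : X} {A : X →L[ℝ] Y} (hA : HasFDerivAt f A p)
    (hAinj : Function.Injective A) {m : ℝ} (hm : 0 < m)
    (hfm : ∀ᵐ y ∂ν, dist y p ≤ m * dist (f y) (f p))
    (hp : Tendsto (fun r ↦ ⨍ y in closedBall p r,
      ‖(ν.rnDeriv μ y).toReal - (ν.rnDeriv μ p).toReal‖ ∂μ) (𝓝[>] 0) (𝓝 0))
    (hp0 : ν.rnDeriv μ p ≠ 0) (hp' : ν.rnDeriv μ p ≠ ∞)
    (hΓp : Tendsto (fun r ↦ ρ (Γᶜ ∩ closedBall (f p) r) / ρ (closedBall (f p) r))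
      (𝓝[>] 0) (𝓝 0)) :
    ∃ c : ℝ≥0∞, c ≠ 0 ∧ c ≠ ∞ ∧ IsAsymptoticAt (finrank ℝ X) ρ
      (c • (μH[finrank ℝ X]).restrict
        (AffineSubspace.mk' (f p) (LinearMap.range (A : X →ₗ[ℝ] Y)))) (f p) := by
  have : ProperSpace X := FiniteDimensional.proper ℝ X
  have : Nontrivial Y := hAinj.nontrivial
  have : IsLocallyFiniteMeasure ν := Measure.isLocallyFiniteMeasure_of_le hνμ
  obtain ⟨c, hc, hflat⟩ := exists_map_affine_addHaar_eq_smul_hausdorffMeasure μ hAinj p (f p)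
  have hρΓ : IsAsymptoticAt (finrank ℝ X) ρ (ρ.restrict Γ) (f p) := by
    refine .restrict_of_isLittleO hΓ (isLittleO_measureReal_compl_inter_closedBall hΓ hΓp ?_)
    rw [← hmap]
    exact isBigO_measureReal_map_closedBall hf hm hfm
      (isBigO_measureReal_closedBall_of_le hνμ (isBigO_measureReal_closedBall μ p))
  have hflat' := isAsymptoticAt_map_smul_map_affine hνμ hf hA hAinj hfm hp
  rw [hmap, hflat] at hflat'
  change IsAsymptoticAt _ _ (ν.rnDeriv μ p • (c : ℝ≥0∞) • _) _ at hflat'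
  rw [smul_smul] at hflat'
  exact ⟨_, mul_ne_zero hp0 (by exact_mod_cast hc.ne'), ENNReal.mul_ne_top hp' ENNReal.coe_ne_top,
    hρΓ.trans hflat'⟩

end TangentPlane

lemma ae_tendsto_average_norm_rnDeriv_sub {X : Type*} [NormedAddCommGroup X] [NormedSpace ℝ X]
    [FiniteDimensional ℝ X] [MeasurableSpace X] [BorelSpace X] (μ ν : Measure X)
    [IsLocallyFiniteMeasure μ] [IsLocallyFiniteMeasure ν] :
    ∀ᵐ x ∂μ, Tendsto (fun r ↦ ⨍ y in closedBall x r,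
      ‖(ν.rnDeriv μ y).toReal - (ν.rnDeriv μ x).toReal‖ ∂μ) (𝓝[>] 0) (𝓝 0) := by
  have : ProperSpace X := FiniteDimensional.proper ℝ X
  have hint : LocallyIntegrable (fun y ↦ (ν.rnDeriv μ y).toReal) μ :=
    locallyIntegrable_iff.2 fun k hk ↦ Measure.integrableOn_toReal_rnDeriv hk.measure_ne_top
  filter_upwards [(Besicovitch.vitaliFamily μ).ae_tendsto_average_norm_sub hint] with x hx
  exact hx.comp (Besicovitch.tendsto_filterAt μ x)

lemma exists_measurable_superset_restrict_eq {α : Type*} [MeasurableSpace α] (μ : Measure α)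
    (s : Set α) [SigmaFinite (μ.restrict s)] :
    ∃ t, s ⊆ t ∧ MeasurableSet t ∧ μ.restrict t = μ.restrict s := by
  refine ⟨toMeasurable μ s, subset_toMeasurable μ s, measurableSet_toMeasurable μ s,
    Measure.restrict_toMeasurable_of_cover (v := spanningSets (μ.restrict s)) ?_ fun i ↦ ?_⟩
  · rw [iUnion_spanningSets]
    exact subset_univ s
  · rw [inter_comm, ← Measure.restrict_apply (measurableSet_spanningSets _ i)]
    exact (measure_spanningSets_lt_top _ i).ne

lemma ae_restrict_of_measure_sdiff_iUnion_eq_zero {α ι : Type*} [Countable ι] [MeasurableSpace α]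
    {μ : Measure α} {s : Set α} {t : ι → Set α} (hst : μ (s \ ⋃ i, t i) = 0) {P : α → Prop}
    (h : ∀ i, ∀ᵐ x ∂μ.restrict (t i), P x) : ∀ᵐ x ∂μ.restrict s, P x := by
  refine ae_mono (Measure.restrict_mono_ae (ae_le_set.2 hst)) ?_
  exact (ae_restrict_iUnion_iff t P).2 h

section RegularPoints

variable {X Y : Type*} [NormedAddCommGroup X] [NormedSpace ℝ X] [FiniteDimensional ℝ X]
  [MeasurableSpace X] [BorelSpace X] [NormedAddCommGroup Y] [NormedSpace ℝ Y]
  [FiniteDimensional ℝ Y]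

/-- The points at which `f` is differentiable with injective derivative, that is, at which the
image of `f` has a tangent plane of full dimension. -/
def regularPoints (f : X → Y) : Set X :=
  {y | DifferentiableAt ℝ f y ∧ Function.Injective (fderiv ℝ f y)}

lemma measurableSet_regularPoints (f : X → Y) : MeasurableSet (regularPoints f) := by
  have : CompleteSpace Y := FiniteDimensional.complete ℝ Y
  exact (measurableSet_of_differentiableAt ℝ f).inter
    (measurable_fderiv ℝ f ContinuousLinearMap.isOpen_injective.measurableSet)

lemma hausdorffMeasure_image_compl_regularPoints [MeasurableSpace Y] [BorelSpace Y] {f : X → Y}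
    {K : ℝ≥0} (hf : LipschitzWith K f) : μH[finrank ℝ X] (f '' (regularPoints f)ᶜ) = 0 := by
  have : ProperSpace Y := FiniteDimensional.proper ℝ Y
  set D := {y | DifferentiableAt ℝ f y}
  have hD : μH[finrank ℝ X] (f '' Dᶜ) = 0 := by
    refine le_antisymm ((hf.hausdorffMeasure_image_le (Nat.cast_nonneg _) _).trans_eq ?_) zero_le
    rw [show μH[finrank ℝ X] Dᶜ = 0 from hf.ae_differentiableAt, mul_zero]
  have hJ : μH[finrank ℝ X] (f '' (D \ {y | Function.Injective (fderiv ℝ f y)})) = 0 :=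
    hausdorffMeasure_image_eq_zero_of_not_injective_fderivWithin
      (fun y hy ↦ hy.1.hasFDerivAt.hasFDerivWithinAt) fun y hy ↦ hy.2
  refine measure_mono_null ?_ (measure_union_null hD hJ)
  rw [← image_union]
  refine image_mono fun y hy ↦ ?_
  by_cases hyD : y ∈ D
  · exact .inr ⟨hyD, fun hyJ ↦ hy ⟨hyD, hyJ⟩⟩
  · exact .inl hyD

end RegularPoints

section Rectifiable

variable {X : Type*} [NormedAddCommGroup X] [NormedSpace ℝ X] [FiniteDimensional ℝ X]
  [Nontrivial X] [MeasurableSpace X] [BorelSpace X] {n : ℕ} {E : Set (EuclideanSpace ℝ (Fin n))}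
  {f : X → EuclideanSpace ℝ (Fin n)} {K : ℝ≥0}

lemma ae_tendsto_alphaA_of_antilipschitzWith
    [IsLocallyFiniteMeasure ((μH[finrank ℝ X]).restrict E)] (hf : LipschitzWith K f) {s : Set X}
    (hs : MeasurableSet s) (hsE : f '' s ⊆ E) {L : ℝ≥0}
    (hfs : AntilipschitzWith L (s.domRestrict f)) (hreg : s ⊆ regularPoints f) :
    ∀ᵐ x ∂(μH[finrank ℝ X]).restrict (f '' s),
      Tendsto (alphaA (finrank ℝ X) ((μH[finrank ℝ X]).restrict E) x) (𝓝[>] 0) (𝓝 0) := by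
  have : ProperSpace X := FiniteDimensional.proper ℝ X
  have hemb : MeasurableEmbedding (s.domRestrict f) :=
    hf.continuous.continuousOn.measurableEmbedding hs (injOn_iff_injective.2 hfs.injective)
  have hΓ : MeasurableSet (f '' s) := range_domRestrict f s ▸ hemb.measurableSet_range
  set ν := comapOn f s μH[finrank ℝ X]
  have hν : ν ≤ K ^ (finrank ℝ X : ℝ) • μH[finrank ℝ X] :=
    comapOn_hausdorffMeasure_le hs hemb hf (Nat.cast_nonneg _)
  have hac : ν ≪ μH[finrank ℝ X] := (Measure.absolutelyContinuous_of_le hν).trans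
    Measure.smul_absolutelyContinuous
  have : IsLocallyFiniteMeasure ν := Measure.isLocallyFiniteMeasure_of_le hν
  have hmap : ν.map f = ((μH[finrank ℝ X]).restrict E).restrict (f '' s) := by
    rw [map_comapOn hs hemb hf.continuous.measurable, Measure.restrict_restrict_of_subset hsE]
  have hdens := ae_of_ae_map hf.continuous.aemeasurable <| hmap ▸ ae_restrict_of_ae <|
    Besicovitch.ae_tendsto_measure_inter_div_of_measurableSet
      ((μH[finrank ℝ X]).restrict E) hΓ.compl
  refine ae_restrict_image_of_ae_comapOn hs hemb ?_
  filter_upwards [Measure.rnDeriv_pos hac, hac.ae_le (Measure.rnDeriv_lt_top ν _),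
    hac.ae_le (ae_tendsto_average_norm_rnDeriv_sub _ ν), hdens,
    ae_comapOn_mem hs hemb] with p hp0 hp' hp hΓp hps
  have hfp : ∀ᵐ y ∂ν, dist y p ≤ (L + 1) * dist (f y) (f p) := by
    filter_upwards [ae_comapOn_mem hs hemb] with y hy
    exact (hfs.le_mul_dist ⟨y, hy⟩ ⟨p, hps⟩).trans
      (mul_le_mul_of_nonneg_right (le_add_of_nonneg_right zero_le_one) dist_nonneg)
  rw [indicator_of_notMem (not_not_intro (mem_image_of_mem f hps))] at hΓp
  obtain ⟨c, hc, hc', hfc⟩ := exists_isAsymptoticAt_smul_hausdorffMeasure_tangent hν hΓ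
    hf.continuous.measurable hmap (hreg hps).1.hasFDerivAt (hreg hps).2 (by positivity) hfp
    hp hp0.ne' hp'.ne hΓp
  refine hfc.tendsto_alphaA hc hc' (AffineSubspace.mk'_nonempty _ _) ?_
  rw [AffineSubspace.direction_mk']
  exact LinearMap.finrank_range_of_inj (hreg hps).2

lemma ae_tendsto_alphaA_of_lipschitzWith (hE : MeasurableSet E)
    [IsLocallyFiniteMeasure ((μH[finrank ℝ X]).restrict E)] (hf : LipschitzWith K f) :
    ∀ᵐ x ∂(μH[finrank ℝ X]).restrict (E ∩ range f),
      Tendsto (alphaA (finrank ℝ X) ((μH[finrank ℝ X]).restrict E) x) (𝓝[>] 0) (𝓝 0) := by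
  obtain ⟨t, ht, hcov, hanti⟩ := exists_closed_cover_antilipschitzWith
    (s := regularPoints f) (fun y hy ↦ hy.1.hasFDerivAt.hasFDerivWithinAt) fun y hy ↦ hy.2
  refine ae_restrict_of_measure_sdiff_iUnion_eq_zero
    (t := fun j ↦ f '' (regularPoints f ∩ t j ∩ f ⁻¹' E)) ?_ fun j ↦ ?_
  · refine measure_mono_null ?_ (hausdorffMeasure_image_compl_regularPoints hf)
    rintro _ ⟨⟨hyE, y, rfl⟩, hy⟩
    refine mem_image_of_mem f fun hreg ↦ hy ?_
    obtain ⟨j, hj⟩ := mem_iUnion.1 (hcov hreg)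
    exact mem_iUnion.2 ⟨j, mem_image_of_mem f ⟨⟨hreg, hj⟩, hyE⟩⟩
  · obtain ⟨L, hL⟩ := hanti j
    exact ae_tendsto_alphaA_of_antilipschitzWith hf
      (((measurableSet_regularPoints f).inter (ht j).measurableSet).inter
        (hf.continuous.measurable hE)) (image_subset_iff.2 inter_subset_right)
      (fun y z ↦ hL ⟨y, y.2.1⟩ ⟨z, z.2.1⟩) fun y hy ↦ hy.1.1

theorem stmt4_general {d : ℕ} (hX : finrank ℝ X = d) {ι : Type*} [Countable ι]
    {f : ι → X → EuclideanSpace ℝ (Fin n)} (hloc : IsLocallyFiniteMeasure ((μH[d]).restrict E))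
    (hf : ∀ i, ∃ K, LipschitzWith K (f i)) {F : Set (EuclideanSpace ℝ (Fin n))} (hFE : F ⊆ E)
    (hF : μH[d] (F \ ⋃ i, range (f i)) = 0) :
    ∀ᵐ x ∂(μH[d]).restrict F, Tendsto (alphaA d ((μH[d]).restrict E) x) (𝓝[>] 0) (𝓝 0) := by
  subst hX
  obtain ⟨E', hEE', hE', hrestr⟩ := exists_measurable_superset_restrict_eq μH[finrank ℝ X] E
  rw [← hrestr] at hloc ⊢
  refine ae_restrict_of_measure_sdiff_iUnion_eq_zero (t := fun i ↦ E' ∩ range (f i)) ?_ fun i ↦ ?_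
  · rw [← inter_iUnion]
    refine measure_mono_null ?_ hF
    exact fun x hx ↦ ⟨hx.1, fun hxf ↦ hx.2 ⟨hEE' (hFE hx.1), hxf⟩⟩
  · obtain ⟨K, hK⟩ := hf i
    exact ae_tendsto_alphaA_of_lipschitzWith hE' hK

end Rectifiable

end

/-- if `E ⊆ ℝ^n` is Borel with `H^d|_E` locally finite and `F ⊆ E` is
`d`-rectifiable, then `α_{H^d|_E}(x,r) → 0` as `r → 0` for `H^d`-a.e. `x ∈ F`. -/
theorem stmt4 (d n : ℕ) (hd : 1 ≤ d) (hdn : d ≤ n)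
    (E : Set (EuclideanSpace ℝ (Fin n))) (hE : MeasurableSet E)
    (hloc : IsLocallyFiniteMeasure ((μH[(d : ℝ)]).restrict E))
    (F : Set (EuclideanSpace ℝ (Fin n))) (hFE : F ⊆ E) (hF : DRectifiable d F) :
    ∀ᵐ x ∂((μH[(d : ℝ)]).restrict F),
      Tendsto (fun r : ℝ => alphaA d ((μH[(d : ℝ)]).restrict E) x r)
        (nhdsWithin 0 (Set.Ioi 0)) (nhds 0) := by
  obtain ⟨-, f, hf, hnull⟩ := hF
  have : Nonempty (Fin d) := ⟨0, hd⟩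
  exact stmt4_general finrank_euclideanSpace_fin hloc hf hFE hnull
end

section
/- Let ω and σ be finite measures on a measurable space X, let R be a measurable set with ω(R) > 0 and σ(R) > 0, and let (Q_i)_{i∈I} be a countable measurable partition of R. Suppose there exist t ∈ (0,1] and i₀ ∈ I such that σ(Q_{i₀}) ≥ t·σ(R) and ω(Q_{i₀})·σ(R) ≤ (1/16)·ω(R)·σ(Q_{i₀}). Then ∑_{i∈I} ω(Q_i)^{1/2} σ(Q_i)^{1/2} ≤ (1 − t/4)·ω(R)^{1/2} σ(R)^{1/2}. -/
open MeasureTheory Filter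
open scoped ENNReal

/-!
For `a, b > 0` and families with `∑ fᵢ² ≤ a²` and `∑ gᵢ² ≤ b²`, expanding `∑ (b fᵢ - a gᵢ)²` shows
that the deficit in the Cauchy–Schwarz inequality `∑ fᵢ gᵢ ≤ a b` is at least
`(b fᵢ - a gᵢ)² / (2 a b)` for any single index `i`. Take `fᵢ = √ω(Qᵢ)`, `gᵢ = √σ(Qᵢ)`,
`a = √ω(R)` and `b = √σ(R)`. If the density `ω/σ` drops by a factor `c²` from `R` to `Q_{i₀}`, then
`b f_{i₀} ≤ c a g_{i₀}`, so the deficit is at least `(1 - c)² a g_{i₀}² / (2 b)`, hence at least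
`(1 - c)² t a b / 2` because `g_{i₀}² ≥ t b²`. For `c = 1/4` the constant `(1 - c)² / 2` is `9/32`,
which exceeds `1/4`.
-/

section CauchySchwarz

variable {ι : Type*} {s : Finset ι} {i : ι}

theorem two_mul_sum_mul_add_sub_sq_le {A : Type*} [CommRing A] [LinearOrder A]
    [IsStrictOrderedRing A] {f g : ι → A} {a b : A}
    (hf : ∑ j ∈ s, f j ^ 2 ≤ a ^ 2) (hg : ∑ j ∈ s, g j ^ 2 ≤ b ^ 2) (hi : i ∈ s) :
    2 * (a * b) * ∑ j ∈ s, f j * g j + (b * f i - a * g i) ^ 2 ≤ 2 * (a * b) ^ 2 := by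
  have single_le : (b * f i - a * g i) ^ 2 ≤ ∑ j ∈ s, (b * f j - a * g j) ^ 2 :=
    Finset.single_le_sum (f := fun j ↦ (b * f j - a * g j) ^ 2) (fun _ _ ↦ sq_nonneg _) hi
  have expand : ∑ j ∈ s, (b * f j - a * g j) ^ 2 =
      b ^ 2 * ∑ j ∈ s, f j ^ 2 + a ^ 2 * ∑ j ∈ s, g j ^ 2 - 2 * (a * b) * ∑ j ∈ s, f j * g j := by
    simp only [Finset.mul_sum, ← Finset.sum_add_distrib, ← Finset.sum_sub_distrib]
    exact Finset.sum_congr rfl fun j _ ↦ by ring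
  calc
    2 * (a * b) * ∑ j ∈ s, f j * g j + (b * f i - a * g i) ^ 2
      ≤ b ^ 2 * ∑ j ∈ s, f j ^ 2 + a ^ 2 * ∑ j ∈ s, g j ^ 2 := by linarith
    _ ≤ b ^ 2 * a ^ 2 + a ^ 2 * b ^ 2 := by gcongr
    _ = 2 * (a * b) ^ 2 := by ring

theorem sum_mul_le_of_sum_sq_le_of_mul_le {𝕜 : Type*} [Field 𝕜] [LinearOrder 𝕜]
    [IsStrictOrderedRing 𝕜] {f g : ι → 𝕜} {a b c t : 𝕜} (ha : 0 ≤ a) (hb : 0 ≤ b)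
    (hf : ∑ j ∈ s, f j ^ 2 ≤ a ^ 2) (hg : ∑ j ∈ s, g j ^ 2 ≤ b ^ 2) (hi : i ∈ s)
    (hgi : 0 ≤ g i) (hc : c ≤ 1) (hbig : t * b ^ 2 ≤ g i ^ 2) (hdrop : b * f i ≤ c * (a * g i)) :
    ∑ j ∈ s, f j * g j ≤ (1 - (1 - c) ^ 2 / 2 * t) * (a * b) := by
  rcases (mul_nonneg ha hb).eq_or_lt with hab | hab
  · have sq_le_zero : (∑ j ∈ s, f j * g j) ^ 2 ≤ 0 := calc
      (∑ j ∈ s, f j * g j) ^ 2 ≤ (∑ j ∈ s, f j ^ 2) * ∑ j ∈ s, g j ^ 2 :=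
        Finset.sum_mul_sq_le_sq_mul_sq s f g
      _ ≤ a ^ 2 * b ^ 2 := by gcongr
      _ = 0 := by rw [← mul_pow, ← hab, zero_pow two_ne_zero]
    rw [pow_eq_zero_iff two_ne_zero |>.mp (sq_le_zero.antisymm (sq_nonneg _)), ← hab, mul_zero]
  · have gap : (1 - c) * (a * g i) ≤ a * g i - b * f i := by linarith
    have gap_sq : (1 - c) ^ 2 * t * (a * b) ^ 2 ≤ (b * f i - a * g i) ^ 2 := calc
      (1 - c) ^ 2 * t * (a * b) ^ 2 = (1 - c) ^ 2 * a ^ 2 * (t * b ^ 2) := by ring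
      _ ≤ (1 - c) ^ 2 * a ^ 2 * g i ^ 2 := by gcongr
      _ = ((1 - c) * (a * g i)) ^ 2 := by ring
      _ ≤ (a * g i - b * f i) ^ 2 :=
        pow_le_pow_left₀ (mul_nonneg (sub_nonneg.mpr hc) (mul_nonneg ha hgi)) gap 2
      _ = (b * f i - a * g i) ^ 2 := by ring
    refine le_of_mul_le_mul_left ?_ (mul_pos two_pos hab)
    linarith [two_mul_sum_mul_add_sub_sq_le hf hg hi]

end CauchySchwarz

theorem sum_measureReal_le_of_subset {X ι : Type*} [MeasurableSpace X] {μ : Measure X} {R : Set X}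
    {s : Finset ι} {Q : ι → Set X} (hR : μ R ≠ ∞) (hQm : ∀ i ∈ s, MeasurableSet (Q i))
    (hdisj : (s : Set ι).PairwiseDisjoint Q) (hQR : ∀ i ∈ s, Q i ⊆ R) :
    ∑ i ∈ s, μ.real (Q i) ≤ μ.real R := by
  rw [← measureReal_biUnion_finset hdisj hQm fun i hi ↦ measure_ne_top_of_subset (hQR i hi) hR]
  exact measureReal_mono (Set.iUnion₂_subset hQR) hR

theorem stmt6_general {X : Type*} [MeasurableSpace X] {ω σ : Measure X} {ι : Type*} {R : Set X}
    (hωR : ω R ≠ ∞) (hσR : σ R ≠ ∞) {Q : ι → Set X} (hQm : ∀ i, MeasurableSet (Q i))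
    (hdisj : Pairwise (Function.onFun Disjoint Q)) (hQR : ∀ i, Q i ⊆ R)
    {t c : ℝ} (hc₀ : 0 ≤ c) (hc₁ : c ≤ 1) {i₀ : ι} (hbig : t * σ.real R ≤ σ.real (Q i₀))
    (hdrop : ω.real (Q i₀) * σ.real R ≤ c ^ 2 * ω.real R * σ.real (Q i₀)) :
    Summable (fun i ↦ √(ω.real (Q i)) * √(σ.real (Q i))) ∧
      ∑' i, √(ω.real (Q i)) * √(σ.real (Q i)) ≤
        (1 - (1 - c) ^ 2 / 2 * t) * (√(ω.real R) * √(σ.real R)) := by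
  classical
  have sqrt_drop : √(σ.real R) * √(ω.real (Q i₀)) ≤ c * (√(ω.real R) * √(σ.real (Q i₀))) := by
    have h := Real.sqrt_le_sqrt hdrop
    rwa [Real.sqrt_mul measureReal_nonneg, mul_comm, Real.sqrt_mul (by positivity),
      Real.sqrt_mul (by positivity), Real.sqrt_sq hc₀, mul_assoc] at h
  have sum_measureReal_le (μ : Measure X) (hμR : μ R ≠ ∞) (s : Finset ι) :
      ∑ i ∈ s, μ.real (Q i) ≤ μ.real R :=
    sum_measureReal_le_of_subset hμR (fun i _ ↦ hQm i) (hdisj.set_pairwise _) fun i _ ↦ hQR i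
  have sum_le (s : Finset ι) : ∑ i ∈ s, √(ω.real (Q i)) * √(σ.real (Q i)) ≤
      (1 - (1 - c) ^ 2 / 2 * t) * (√(ω.real R) * √(σ.real R)) := calc
    _ ≤ ∑ i ∈ insert i₀ s, √(ω.real (Q i)) * √(σ.real (Q i)) :=
      Finset.sum_le_sum_of_subset_of_nonneg (Finset.subset_insert i₀ s) fun _ _ _ ↦ by positivity
    _ ≤ _ := by
      refine sum_mul_le_of_sum_sq_le_of_mul_le (Real.sqrt_nonneg _) (Real.sqrt_nonneg _) ?_ ?_
        (Finset.mem_insert_self i₀ s) (Real.sqrt_nonneg _) hc₁ ?_ sqrt_drop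
      all_goals simp only [Real.sq_sqrt measureReal_nonneg]
      exacts [sum_measureReal_le ω hωR _, sum_measureReal_le σ hσR _, hbig]
  have nonneg (i : ι) : 0 ≤ √(ω.real (Q i)) * √(σ.real (Q i)) := by positivity
  exact ⟨summable_of_sum_le nonneg sum_le, Real.tsum_le_of_sum_le nonneg sum_le⟩

/-- if some cell `Q_{i₀}` of a countable measurable partition of `R`
carries a definite proportion of `σ(R)` but has `ω`-density dropping by a factor `16`,
then `∑ ω(Q_i)^{1/2} σ(Q_i)^{1/2} ≤ (1 − t/4) ω(R)^{1/2} σ(R)^{1/2}`. -/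
theorem stmt6 {X : Type*} [MeasurableSpace X] (ω σ : Measure X)
    [IsFiniteMeasure ω] [IsFiniteMeasure σ]
    {ι : Type*} [Countable ι]
    (R : Set X) (hR : MeasurableSet R) (hωR : 0 < ω R) (hσR : 0 < σ R)
    (Q : ι → Set X) (hQm : ∀ i, MeasurableSet (Q i))
    (hdisj : Pairwise (Function.onFun Disjoint Q))
    (hunion : (⋃ i, Q i) = R)
    (t : ℝ) (ht0 : 0 < t) (ht1 : t ≤ 1) (i₀ : ι)
    (hbig : t * (σ R).toReal ≤ (σ (Q i₀)).toReal)
    (hdrop : (ω (Q i₀)).toReal * (σ R).toReal ≤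
      (1 / 16) * (ω R).toReal * (σ (Q i₀)).toReal) :
    (∑' i, ((ω (Q i)).toReal) ^ ((1 : ℝ) / 2) * ((σ (Q i)).toReal) ^ ((1 : ℝ) / 2)) ≤
      (1 - t / 4) * ((ω R).toReal) ^ ((1 : ℝ) / 2) * ((σ R).toReal) ^ ((1 : ℝ) / 2) := by
  simp only [← Real.sqrt_eq_rpow, mul_assoc]
  refine (stmt6_general (measure_ne_top ω R) (measure_ne_top σ R) hQm hdisj
    (fun i ↦ hunion ▸ Set.subset_iUnion Q i) (c := 1 / 4) (by norm_num) (by norm_num) hbig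
    (by rwa [show (1 / 4 : ℝ) ^ 2 = 1 / 16 by norm_num])).2.trans ?_
  exact mul_le_mul_of_nonneg_right (by linarith) (by positivity)
end

section
/- Let ω be a finite Borel measure on a metric space X, let Q₀ ⊆ X be a Borel set, and for each n ∈ ℕ let 𝒟_n be a countable Borel partition of Q₀ with sup_{Q∈𝒟_n} diam Q → 0 as n → ∞. Let t > 0, C > 0 and γ ∈ (0,1), and suppose that for every n, ∑_{Q ∈ 𝒟_n : ω(Q) ≤ (diam Q)^t} ω(Q) ≤ C·γ^n. Let G be the set of points x ∈ Q₀ for which there exists r₀ > 0 such that every Q ∈ ⋃_n 𝒟_n with x ∈ Q and diam Q < r₀ satisfies ω(Q) ≤ (diam Q)^t. Then ω(G) = 0. -/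
open MeasureTheory Filter
open scoped ENNReal Classical

/-! By countable subadditivity, the measure of the union of the cells `Q` of the `n`-th cover with
`μ Q ≤ φ (diam Q)` is summable in `n`, so by Borel–Cantelli almost every point lies in only finitely
many of these unions. Since the mesh of the covers tends to zero, a point all of whose small cells
satisfy `μ Q ≤ φ (diam Q)` lies in all but finitely many of them. -/

section BorelCantelli

variable {X ι F : Type*} [FunLike F (Set X) ℝ≥0∞] [OuterMeasureClass F X] [Countable ι]

theorem measure_setOfPred_exists_and_mem_le_tsum_ite (μ : F) (s : ι → Set X) (p : ι → Prop)
    [DecidablePred p] :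
    μ {x | ∃ i, p i ∧ x ∈ s i} ≤ ∑' i, if p i then μ (s i) else 0 :=
  calc
    μ {x | ∃ i, p i ∧ x ∈ s i} = μ (⋃ i ∈ {i | p i}, s i) := by
      congr 1
      ext x
      simp
    _ ≤ ∑' i : {i | p i}, μ (s i) := measure_biUnion_le μ (Set.to_countable _) s
    _ = ∑' i, if p i then μ (s i) else 0 := by
      rw [tsum_subtype {i | p i} fun i => μ (s i)]
      simp only [Set.indicator_apply, Set.mem_ofPred_eq]

theorem measure_setOfPred_frequently_exists_and_mem_eq_zero (μ : F) {s : ℕ → ι → Set X}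
    {p : ℕ → ι → Prop} [∀ n, DecidablePred (p n)]
    (hsum : ∑' n, ∑' i, (if p n i then μ (s n i) else 0) ≠ ∞) :
    μ {x | ∃ᶠ n in atTop, ∃ i, p n i ∧ x ∈ s n i} = 0 :=
  measure_setOfPred_frequently_eq_zero <| ne_top_of_le_ne_top hsum <|
    ENNReal.tsum_le_tsum fun n => measure_setOfPred_exists_and_mem_le_tsum_ite μ (s n) (p n)

end BorelCantelli

theorem eventually_exists_mem_and_ediam_lt {X ι κ : Type*} [PseudoEMetricSpace X]
    {l : Filter κ} {s : κ → ι → Set X} {x : X} {r : ℝ≥0∞}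
    (hx : ∀ n, x ∈ ⋃ i, s n i)
    (hdiam : Tendsto (fun n => ⨆ i, Metric.ediam (s n i)) l (nhds 0)) (hr : 0 < r) :
    ∀ᶠ n in l, ∃ i, x ∈ s n i ∧ Metric.ediam (s n i) < r := by
  filter_upwards [hdiam.eventually_lt_const hr] with n hn
  obtain ⟨i, hi⟩ := Set.mem_iUnion.1 (hx n)
  exact ⟨i, hi, (le_iSup (fun i => Metric.ediam (s n i)) i).trans_lt hn⟩

theorem stmt9_general {X ι F : Type*} [PseudoEMetricSpace X] [FunLike F (Set X) ℝ≥0∞]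
    [OuterMeasureClass F X] [Countable ι] (μ : F) {A : Set X} {D : ℕ → ι → Set X}
    (hcover : ∀ n, A ⊆ ⋃ i, D n i)
    (hdiam : Tendsto (fun n => ⨆ i, Metric.ediam (D n i)) atTop (nhds 0))
    (φ : ℝ≥0∞ → ℝ≥0∞)
    (hsum : ∑' n, ∑' i, (if μ (D n i) ≤ φ (Metric.ediam (D n i)) then μ (D n i) else 0) ≠ ∞) :
    μ {x ∈ A | ∃ r₀ : ℝ, 0 < r₀ ∧ ∀ n i, x ∈ D n i →
        Metric.ediam (D n i) < ENNReal.ofReal r₀ →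
        μ (D n i) ≤ φ (Metric.ediam (D n i))} = 0 := by
  refine measure_mono_null ?_ (measure_setOfPred_frequently_exists_and_mem_eq_zero μ hsum)
  rintro x ⟨hxA, r₀, hr₀, hsmall⟩
  have hcells : ∀ᶠ n in atTop, ∃ i, x ∈ D n i ∧ Metric.ediam (D n i) < ENNReal.ofReal r₀ :=
    eventually_exists_mem_and_ediam_lt (fun n => hcover n hxA) hdiam (ENNReal.ofReal_pos.2 hr₀)
  exact (hcells.mono fun n ⟨i, hxi, hi⟩ => ⟨i, hsmall n i hxi hi, hxi⟩).frequently

/-- if for each `n` the total `ω`-mass of the cells `Q` of the `n`-th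
partition with `ω(Q) ≤ (diam Q)^t` is at most `C γ^n`, then the set of points all of
whose sufficiently small cells satisfy `ω(Q) ≤ (diam Q)^t` is `ω`-null. -/
theorem stmt9 {X : Type*} [MetricSpace X] [MeasurableSpace X] [BorelSpace X]
    (ω : Measure X) [IsFiniteMeasure ω]
    (Q₀ : Set X) (hQ₀ : MeasurableSet Q₀)
    (D : ℕ → ℕ → Set X)
    (hmeas : ∀ n i, MeasurableSet (D n i))
    (hdisj : ∀ n, Pairwise (Function.onFun Disjoint (D n)))
    (hcover : ∀ n, (⋃ i, D n i) = Q₀)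
    (hdiam : Tendsto (fun n => ⨆ i, EMetric.diam (D n i)) atTop (nhds 0))
    (t : ℝ) (ht : 0 < t) (C : ℝ) (hC : 0 < C) (γ : ℝ) (hγ0 : 0 < γ) (hγ1 : γ < 1)
    (hsum : ∀ n, (∑' i, if ω (D n i) ≤ EMetric.diam (D n i) ^ t then ω (D n i) else 0)
      ≤ ENNReal.ofReal (C * γ ^ n)) :
    ω {x ∈ Q₀ | ∃ r₀ : ℝ, 0 < r₀ ∧ ∀ n i, x ∈ D n i →
        EMetric.diam (D n i) < ENNReal.ofReal r₀ →
        ω (D n i) ≤ EMetric.diam (D n i) ^ t} = 0 := by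
  have hgeom : Summable fun n => C * γ ^ n :=
    (summable_geometric_of_lt_one hγ0.le hγ1).mul_left C
  exact stmt9_general ω (fun n => (hcover n).ge) hdiam (· ^ t)
    (ne_top_of_le_ne_top hgeom.tsum_ofReal_ne_top (ENNReal.tsum_le_tsum hsum))
end

section
/- Let ω be a finite Borel measure on a metric space X, let Q₀ ⊆ X be a Borel set, and let (𝒟_n)_{n∈ℕ} be a sequence of countable Borel partitions of Q₀ such that every element of 𝒟_{n+1} is contained in some element of 𝒟_n, and sup_{Q∈𝒟_n} diam Q → 0 as n → ∞. Let t > 0 and let F ⊆ Q₀ be a set such that for every x ∈ F and every r > 0 there exist n ∈ ℕ and Q ∈ 𝒟_n with x ∈ Q, diam Q < r and (diam Q)^t ≤ 2·ω(Q). Then H^t(F) ≤ 2·ω(Q₀), where H^t denotes t-dimensional Hausdorff measure on X. -/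
open MeasureTheory Filter
open scoped ENNReal

/-!
Cells of nested partitions are pairwise either disjoint or nested. Hence, among the cells `Q` of
diameter less than `r` with `m (diam Q) ≤ μ Q`, those contained in no such cell of an earlier
generation are pairwise disjoint, and they still cover `F` because generations are well ordered.
Summing `m (diam Q) ≤ μ Q` over this disjoint cover bounds the Carathéodory sum by `μ Q₀`, uniformly
in `r`. The Hausdorff bound is the case `m d = d ^ t` and `μ = 2 • ω`.
-/

section NestedFamilies

variable {X α ι : Type*}

theorem exists_subset_of_le_of_forall_succ {D : ℕ → ι → Set X}
    (hnested : ∀ n i, ∃ j, D (n + 1) i ⊆ D n j) {m n : ℕ} (hmn : m ≤ n) (i : ι) :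
    ∃ j, D n i ⊆ D m j := by
  induction n, hmn using Nat.le_induction generalizing i with
  | base => exact ⟨i, subset_rfl⟩
  | succ n _ ih =>
    obtain ⟨i', hi'⟩ := hnested n i
    obtain ⟨j, hj⟩ := ih i'
    exact ⟨j, hi'.trans hj⟩

theorem subset_or_disjoint_of_exists_subset {A : ι → Set X}
    (hdisj : Pairwise (Function.onFun Disjoint A)) {B : Set X} (hB : ∃ j, B ⊆ A j) (i : ι) :
    B ⊆ A i ∨ Disjoint (A i) B := by
  obtain ⟨j, hj⟩ := hB
  obtain rfl | hij := eq_or_ne i j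
  · exact .inl hj
  · exact .inr ((hdisj hij).mono_right hj)

/-- The indices in `G` of the cells of the family `D` that lie in no cell of an earlier generation
indexed by `G`. Comparing generations, rather than the cells themselves by inclusion, keeps only
the earliest copy of a cell that recurs in several generations. -/
def coarsestCells [LE α] (D : α → ι → Set X) (G : Set (α × ι)) : Set (α × ι) :=
  {p ∈ G | ∀ q ∈ G, D p.1 p.2 ⊆ D q.1 q.2 → p.1 ≤ q.1}

theorem coarsestCells_subset [LE α] (D : α → ι → Set X) (G : Set (α × ι)) :
    coarsestCells D G ⊆ G :=
  Set.sep_subset _ _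

theorem pairwiseDisjoint_coarsestCells [LinearOrder α] {D : α → ι → Set X}
    (hdisj : ∀ n, Pairwise (Function.onFun Disjoint (D n)))
    (hnested : ∀ ⦃m n⦄, m ≤ n → ∀ i, ∃ j, D n i ⊆ D m j) (G : Set (α × ι)) :
    (coarsestCells D G).PairwiseDisjoint fun p ↦ D p.1 p.2 := by
  rintro ⟨m, i⟩ hp ⟨n, j⟩ hq hpq
  wlog hmn : m ≤ n generalizing m n i j
  · exact (this n j hq m i hp hpq.symm (le_of_not_ge hmn)).symm
  obtain hsub | hdis := subset_or_disjoint_of_exists_subset (hdisj m) (hnested hmn j) i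
  · obtain rfl : m = n := hmn.antisymm (hq.2 (m, i) hp.1 hsub)
    exact hdisj m fun hij ↦ hpq (Prod.ext rfl hij)
  · exact hdis

theorem biUnion_coarsestCells [LinearOrder α] [WellFoundedLT α] (D : α → ι → Set X)
    (G : Set (α × ι)) : ⋃ p ∈ coarsestCells D G, D p.1 p.2 = ⋃ p ∈ G, D p.1 p.2 := by
  refine (Set.biUnion_subset_biUnion_left (coarsestCells_subset D G)).antisymm fun x hx ↦ ?_
  obtain ⟨p₀, hp₀G, hxp₀⟩ := Set.mem_iUnion₂.1 hx
  obtain ⟨p, ⟨hpG, hxp⟩, hmin⟩ := exists_minimalFor_of_wellFoundedLT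
    (fun p : α × ι ↦ p ∈ G ∧ x ∈ D p.1 p.2) Prod.fst ⟨p₀, hp₀G, hxp₀⟩
  refine Set.mem_biUnion (x := p) ⟨hpG, fun q hqG hpq ↦ ?_⟩ hxp
  exact (le_total p.1 q.1).elim id (hmin ⟨hqG, hpq hxp⟩)

end NestedFamilies

section CaratheodoryConstruction

theorem tsum_le_measure_of_pairwiseDisjoint {X κ : Type*} [MeasurableSpace X] {μ : Measure X}
    {A : κ → Set X} {U : Set X} {S : Set κ} {f : κ → ℝ≥0∞}
    (hA : ∀ k ∈ S, MeasurableSet (A k)) (hAU : ∀ k ∈ S, A k ⊆ U) (hS : S.PairwiseDisjoint A)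
    (hf : ∀ k ∈ S, f k ≤ μ (A k)) : ∑' k : S, f k ≤ μ U :=
  calc
    ∑' k : S, f k ≤ ∑' k : S, μ (A k) := ENNReal.tsum_le_tsum fun k ↦ hf k.1 k.2
    _ ≤ μ (⋃ k : S, A k) :=
      tsum_meas_le_meas_iUnion_of_disjoint μ (fun k ↦ hA k.1 k.2) hS.subtype
    _ ≤ μ U := measure_mono (Set.iUnion_subset fun k ↦ hAU k.1 k.2)

variable {X : Type*} [EMetricSpace X] [MeasurableSpace X] [BorelSpace X]
  {μ : Measure X} {m : ℝ≥0∞ → ℝ≥0∞} {F U : Set X}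

theorem mkMetric_le_measure_of_pairwiseDisjoint_cover {κ β : Type*} [Countable κ] {A : κ → Set X}
    (hA : ∀ k, MeasurableSet (A k)) (hAU : ∀ k, A k ⊆ U) {l : Filter β} [l.NeBot]
    {r : β → ℝ≥0∞} (hr : Tendsto r l (nhds 0)) (S : β → Set κ)
    (hS : ∀ b, (S b).PairwiseDisjoint A) (hdiam : ∀ b, ∀ k ∈ S b, Metric.ediam (A k) ≤ r b)
    (hm : ∀ b, ∀ k ∈ S b, m (Metric.ediam (A k)) ≤ μ (A k))
    (hF : ∀ᶠ b in l, F ⊆ ⋃ k ∈ S b, A k) :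
    Measure.mkMetric m F ≤ μ U := by
  simp only [Set.biUnion_eq_iUnion] at hF
  calc
    Measure.mkMetric m F ≤ liminf (fun b ↦ ∑' k : S b, m (Metric.ediam (A k))) l :=
      Measure.mkMetric_le_liminf_tsum F r hr (fun b (k : S b) ↦ A k)
        (.of_forall fun b k ↦ hdiam b k.1 k.2) hF m
    _ ≤ μ U := liminf_le_of_frequently_le' <| .of_forall fun b ↦
      tsum_le_measure_of_pairwiseDisjoint (fun k _ ↦ hA k) (fun k _ ↦ hAU k) (hS b) (hm b)

theorem stmt10_general {ι : Type*} [Countable ι] {D : ℕ → ι → Set X}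
    (hmeas : ∀ n i, MeasurableSet (D n i))
    (hdisj : ∀ n, Pairwise (Function.onFun Disjoint (D n)))
    (hsub : ∀ n i, D n i ⊆ U)
    (hnested : ∀ n i, ∃ j, D (n + 1) i ⊆ D n j)
    (hsel : ∀ x ∈ F, ∀ r : ℝ, 0 < r → ∃ n i, x ∈ D n i ∧
      Metric.ediam (D n i) < ENNReal.ofReal r ∧ m (Metric.ediam (D n i)) ≤ μ (D n i)) :
    Measure.mkMetric m F ≤ μ U := by
  let good (r : ℝ) : Set (ℕ × ι) := {p | Metric.ediam (D p.1 p.2) < ENNReal.ofReal r ∧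
    m (Metric.ediam (D p.1 p.2)) ≤ μ (D p.1 p.2)}
  have hr : Tendsto ENNReal.ofReal (nhdsWithin 0 (Set.Ioi 0)) (nhds 0) := by
    simpa using (ENNReal.continuous_ofReal.tendsto 0).mono_left nhdsWithin_le_nhds
  have hcover : ∀ r > 0, F ⊆ ⋃ p ∈ coarsestCells D (good r), D p.1 p.2 := fun r hr₀ x hx ↦ by
    obtain ⟨n, i, hxi, hgood⟩ := hsel x hx r hr₀
    rw [biUnion_coarsestCells]
    exact Set.mem_biUnion (x := (n, i)) hgood hxi
  have hcoarsest (r : ℝ) : (coarsestCells D (good r)).PairwiseDisjoint fun p ↦ D p.1 p.2 :=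
    pairwiseDisjoint_coarsestCells hdisj
      (fun _ _ ↦ exists_subset_of_le_of_forall_succ hnested) (good r)
  exact mkMetric_le_measure_of_pairwiseDisjoint_cover (A := fun p : ℕ × ι ↦ D p.1 p.2)
    (fun p ↦ hmeas p.1 p.2) (fun p ↦ hsub p.1 p.2) hr (fun r ↦ coarsestCells D (good r)) hcoarsest
    (fun r p hp ↦ (coarsestCells_subset D (good r) hp).1.le)
    (fun r p hp ↦ (coarsestCells_subset D (good r) hp).2)
    (eventually_mem_nhdsWithin.mono hcover)

end CaratheodoryConstruction

/-- a Vitali-type covering bound: if every point of `F` lies in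
arbitrarily small partition cells `Q` with `(diam Q)^t ≤ 2 ω(Q)`, then
`H^t(F) ≤ 2 ω(Q₀)`. -/
theorem stmt10 {X : Type*} [MetricSpace X] [MeasurableSpace X] [BorelSpace X]
    (ω : Measure X) [IsFiniteMeasure ω]
    (Q₀ : Set X) (hQ₀ : MeasurableSet Q₀)
    (D : ℕ → ℕ → Set X)
    (hmeas : ∀ n i, MeasurableSet (D n i))
    (hdisj : ∀ n, Pairwise (Function.onFun Disjoint (D n)))
    (hcover : ∀ n, (⋃ i, D n i) = Q₀)
    (hnested : ∀ n i, ∃ i', D (n + 1) i ⊆ D n i')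
    (hdiam : Tendsto (fun n => ⨆ i, EMetric.diam (D n i)) atTop (nhds 0))
    (t : ℝ) (ht : 0 < t)
    (F : Set X) (hFQ₀ : F ⊆ Q₀)
    (hsel : ∀ x ∈ F, ∀ r : ℝ, 0 < r → ∃ n i, x ∈ D n i ∧
      EMetric.diam (D n i) < ENNReal.ofReal r ∧
      EMetric.diam (D n i) ^ t ≤ 2 * ω (D n i)) :
    μH[t] F ≤ 2 * ω Q₀ :=
  stmt10_general (μ := (2 : ℝ≥0∞) • ω) hmeas hdisj
    (fun n i ↦ hcover n ▸ Set.subset_iUnion (D n) i) hnested hsel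
end

section
/- Let n ∈ ℕ, s > 0 and C₁ ≥ 1, and let E ⊆ ℝ^n be Ahlfors s-regular with constant C₁. Then for every 0 < t ≤ s there is a constant c > 0, depending only on n, s, t and C₁, such that H^t_∞(E ∩ B(x,r)) ≥ c·r^t for every x ∈ E and every 0 < r < diam E. -/
open MeasureTheory Metric Filter
open scoped ENNReal NNReal

open MeasureTheory Metric Filter
open scoped ENNReal
open scoped Topology

/-!
This is the mass distribution principle. The upper regularity of `E` controls the mass of every
small piece of `E` by its diameter, `μ U ≤ b (diam U)^s`. Inside a ball of radius `r` a piece has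
mass at most `b (min(r, diam U))^s ≤ b r^(s-t) (diam U)^t`, so summing over a cover bounds
`μ (E ∩ B(x, r))` by `b r^(s-t)` times the `t`-content. Dividing the lower bound `a r^s` for that
mass by `b r^(s-t)` leaves `(a / b) r^t`.
-/

theorem rpow_le_rpow_sub_mul_rpow {x y z : ℝ≥0∞} {s t : ℝ} (hxy : x ≤ y) (hxz : x ≤ z)
    (ht : 0 ≤ t) (hts : t ≤ s) : x ^ s ≤ y ^ (s - t) * z ^ t := by
  have hst : 0 ≤ s - t := sub_nonneg.2 hts
  calc
    x ^ s = x ^ (s - t) * x ^ t := by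
      rw [← ENNReal.rpow_add_of_nonneg _ _ hst ht, sub_add_cancel]
    _ ≤ y ^ (s - t) * z ^ t := by gcongr

theorem ofReal_mul_rpow {r : ℝ} (hr : 0 < r) (c t : ℝ) :
    ENNReal.ofReal (c * r ^ t) = ENNReal.ofReal c * ENNReal.ofReal r ^ t := by
  rw [ENNReal.ofReal_mul' (by positivity), ENNReal.ofReal_rpow_of_pos hr]

section HausdorffContent

variable {X : Type*} [PseudoEMetricSpace X]

/-- The `t`-dimensional Hausdorff content, as `hContent` but in any extended metric space, where the
mass distribution principle holds. Covers are infinite sequences of sets, so the value is meaningful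
only for `0 < t`, when the empty sets that pad a finite cover contribute `0 ^ t = 0`. -/
noncomputable def hausdorffContent (t : ℝ) (A : Set X) : ℝ≥0∞ :=
  ⨅ (U : ℕ → Set X) (_ : A ⊆ ⋃ i, U i), ∑' i, ediam (U i) ^ t

theorem hContent_eq_hausdorffContent {n : ℕ} (t : ℝ) (A : Set (EuclideanSpace ℝ (Fin n))) :
    hContent t A = hausdorffContent t A :=
  rfl

theorem measure_div_le_hausdorffContent [MeasurableSpace X] {μ : Measure X} {A : Set X} {t : ℝ}
    {K : ℝ≥0∞} (h : ∀ U, μ (A ∩ U) ≤ K * ediam U ^ t) : μ A / K ≤ hausdorffContent t A := by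
  refine le_iInf₂ fun U hU => ENNReal.div_le_of_le_mul' ?_
  calc
    μ A = μ (⋃ i, A ∩ U i) := by rw [← Set.inter_iUnion, Set.inter_eq_left.2 hU]
    _ ≤ ∑' i, μ (A ∩ U i) := measure_iUnion_le _
    _ ≤ ∑' i, K * ediam (U i) ^ t := ENNReal.tsum_le_tsum fun i => h (U i)
    _ = K * ∑' i, ediam (U i) ^ t := ENNReal.tsum_mul_left

end HausdorffContent

section AhlforsRegular

variable {X : Type*} [PseudoEMetricSpace X] [MeasurableSpace X]

/-- The upper half of Ahlfors `s`-regularity with constant `b`, for an arbitrary measure in place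
of `H^s`: the half that bounds the mass of every small piece of `E`. Radii are extended nonnegative
reals, in order to be compared with `ediam` directly. -/
def IsUpperAhlforsRegular (μ : Measure X) (s : ℝ) (b : ℝ≥0) (E : Set X) : Prop :=
  ∀ x ∈ E, ∀ r ≠ 0, r < ediam E → μ (E ∩ closedEBall x r) ≤ b * r ^ s

variable {μ : Measure X} {s t : ℝ} {a : ℝ≥0∞} {b : ℝ≥0} {E U : Set X} {x : X} {r : ℝ≥0∞}

theorem IsUpperAhlforsRegular.measure_le_ediam_rpow (hE : IsUpperAhlforsRegular μ s b E)
    (hUE : U ⊆ E) (hU : ediam U < ediam E) : μ U ≤ b * ediam U ^ s := by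
  obtain rfl | ⟨y, hy⟩ := U.eq_empty_or_nonempty
  · simp
  have measure_le : ∀ ρ ∈ Set.Ioo (ediam U) (ediam E), μ U ≤ b * ρ ^ s := fun ρ hρ =>
    calc
      μ U ≤ μ (E ∩ closedEBall y ρ) := measure_mono fun z hz =>
        ⟨hUE hz, (edist_le_ediam_of_mem hz hy).trans hρ.1.le⟩
      _ ≤ b * ρ ^ s := hE y (hUE hy) ρ hρ.1.ne_bot hρ.2
  -- The radius `ediam U` may be `0`, so it is approached from above.
  have tendsto_bound : Tendsto (fun ρ : ℝ≥0∞ => b * ρ ^ s) (𝓝[>] ediam U)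
      (𝓝 (b * ediam U ^ s)) :=
    ((ENNReal.continuous_const_mul ENNReal.coe_ne_top).comp
      ENNReal.continuous_rpow_const).continuousWithinAt
  have : (𝓝[>] ediam U).NeBot := nhdsGT_neBot_of_exists_gt ⟨_, hU⟩
  exact ge_of_tendsto tendsto_bound (mem_of_superset (Ioo_mem_nhdsGT hU) measure_le)

theorem IsUpperAhlforsRegular.measure_inter_closedEBall_inter_le
    (hE : IsUpperAhlforsRegular μ s b E) (ht : 0 ≤ t) (hts : t ≤ s) (hx : x ∈ E) (hr : r ≠ 0)
    (hrE : r < ediam E) (U : Set X) :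
    μ (E ∩ closedEBall x r ∩ U) ≤ b * r ^ (s - t) * ediam U ^ t := by
  have hs : 0 ≤ s := ht.trans hts
  set V := E ∩ closedEBall x r ∩ U
  have ediam_le : ediam V ≤ ediam U := ediam_mono Set.inter_subset_right
  have measure_le : μ V ≤ b * min r (ediam U) ^ s := by
    rcases le_total r (ediam U) with hrU | hUr
    · rw [min_eq_left hrU]
      exact (measure_mono Set.inter_subset_left).trans (hE x hx r hr hrE)
    · rw [min_eq_right hUr]
      calc
        μ V ≤ b * ediam V ^ s := hE.measure_le_ediam_rpow
          (Set.inter_subset_left.trans Set.inter_subset_left)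
          (ediam_le.trans_lt (hUr.trans_lt hrE))
        _ ≤ b * ediam U ^ s := by gcongr
  calc
    μ V ≤ b * min r (ediam U) ^ s := measure_le
    _ ≤ b * (r ^ (s - t) * ediam U ^ t) := by
      gcongr
      exact rpow_le_rpow_sub_mul_rpow (min_le_left _ _) (min_le_right _ _) ht hts
    _ = b * r ^ (s - t) * ediam U ^ t := (mul_assoc _ _ _).symm

theorem stmt11_general (ht : 0 < t) (hts : t ≤ s) (hE : IsUpperAhlforsRegular μ s b E)
    (hx : x ∈ E) (hr : r ≠ 0) (hrE : r < ediam E)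
    (hlower : a * r ^ s ≤ μ (E ∩ closedEBall x r)) :
    a / b * r ^ t ≤ hausdorffContent t (E ∩ closedEBall x r) := by
  have hr_top : r ≠ ⊤ := hrE.ne_top
  have hr_pow : r ^ (s - t) ≠ 0 := (ENNReal.rpow_pos hr.bot_lt hr_top).ne'
  have hr_pow_top : r ^ (s - t) ≠ ⊤ := ENNReal.rpow_ne_top_of_nonneg (sub_nonneg.2 hts) hr_top
  calc
    a / b * r ^ t = a * r ^ t * r ^ (s - t) / (b * r ^ (s - t)) := by
      rw [ENNReal.mul_div_mul_right _ _ hr_pow hr_pow_top, ENNReal.mul_div_right_comm]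
    _ = a * r ^ s / (b * r ^ (s - t)) := by
      rw [mul_assoc, ← ENNReal.rpow_add _ _ hr hr_top, add_sub_cancel]
    _ ≤ μ (E ∩ closedEBall x r) / (b * r ^ (s - t)) := by gcongr
    _ ≤ hausdorffContent t (E ∩ closedEBall x r) := measure_div_le_hausdorffContent
      (hE.measure_inter_closedEBall_inter_le ht.le hts hx hr hrE)

end AhlforsRegular

theorem AhlforsRegular.isUpperAhlforsRegular {n : ℕ} {s C : ℝ}
    {E : Set (EuclideanSpace ℝ (Fin n))} (hE : AhlforsRegular s C E) :
    IsUpperAhlforsRegular μH[s] s C.toNNReal E := by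
  intro x hx r hr hrE
  lift r to ℝ≥0 using hrE.ne_top
  have hr_pos : (0 : ℝ) < r := NNReal.coe_pos.2 (by simpa [pos_iff_ne_zero] using hr)
  have h := (hE x hx r hr_pos (by rwa [ENNReal.ofReal_coe_nnreal])).2
  rwa [ofReal_mul_rpow hr_pos, ENNReal.ofReal_coe_nnreal, ← closedEBall_coe] at h

theorem AhlforsRegular.ofReal_mul_rpow_le_hContent {n : ℕ} {s t C r : ℝ}
    {E : Set (EuclideanSpace ℝ (Fin n))} {x : EuclideanSpace ℝ (Fin n)}
    (hE : AhlforsRegular s C E) (hC : 0 < C) (ht : 0 < t) (hts : t ≤ s) (hx : x ∈ E) (hr : 0 < r)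
    (hrE : ENNReal.ofReal r < ediam E) :
    ENNReal.ofReal (C⁻¹ / C * r ^ t) ≤ hContent t (E ∩ closedBall x r) := by
  have hlower := (hE x hx r hr hrE).1
  rw [ofReal_mul_rpow hr, ← closedEBall_ofReal hr.le] at hlower
  rw [ofReal_mul_rpow hr, ENNReal.ofReal_div_of_pos hC, ← closedEBall_ofReal hr.le,
    hContent_eq_hausdorffContent]
  exact stmt11_general ht hts hE.isUpperAhlforsRegular hx (ENNReal.ofReal_pos.2 hr).ne' hrE hlower

/-- an Ahlfors `s`-regular set has lower `t`-content regular balls for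
every `0 < t ≤ s`: `H^t_∞(E ∩ B(x,r)) ≥ c r^t` with `c = c(n,s,t,C₁) > 0`. -/
theorem stmt11 (n : ℕ) (s C₁ : ℝ) (hs : 0 < s) (hC₁ : 1 ≤ C₁)
    (t : ℝ) (ht0 : 0 < t) (hts : t ≤ s) :
    ∃ c : ℝ, 0 < c ∧
      ∀ E : Set (EuclideanSpace ℝ (Fin n)), AhlforsRegular s C₁ E →
        ∀ x ∈ E, ∀ r : ℝ, 0 < r → ENNReal.ofReal r < EMetric.diam E →
          ENNReal.ofReal (c * r ^ t) ≤ hContent t (E ∩ closedBall x r) := by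
  have hC₁_pos : 0 < C₁ := zero_lt_one.trans_le hC₁
  exact ⟨C₁⁻¹ / C₁, by positivity, fun _ hE _ hx _ hr hrE =>
    hE.ofReal_mul_rpow_le_hContent hC₁_pos ht0 hts hx hr hrE⟩
end
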